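/- Let k ≥ 2, let r_1,…,r_k be fixed positive integers, r = r_1 + ⋯ + r_k, and let {G_i}_{i≥1} be a sequence of finite groups with identity e such that |G_i| → ∞, the exponent of G_i divides r, and gcd(r_j, |G_i|) = 1 for every j ∈ {1,…,k} and every i. Let S_i = {(x_1,…,x_k) ∈ G_i^k : x_1^{r_1}·x_2^{r_2}·…·x_k^{r_k} = e} and let S_i^{(k)} be the tuples of S_i with pairwise distinct entries. Then for every β > 0 and every δ with 0 < δ ≤ min{β/2, 1/40} there exist an index i₀ and a constant C > 0 such that for every i ≥ i₀ and every integer t with (C/δ)·k^{−1/(k−1)}·|G_i|^{1/(k−1)} ≤ t ≤ (δ/2)·|G_i|, the number of subsets X ⊆ G_i with |X| = t and X^k ∩ S_i^{(k)} = ∅ is at most C(⌊β|G_i|⌋, t). -/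

import Mathlib

open Finset Filter Topology

attribute [local instance] Classical.propDecidable

/-- The set `S^{(k)}` of tuples of `S` with pairwise distinct entries. -/
noncomputable def distinctPart {k : ℕ} {G : Type} (S : Finset (Fin k → G)) :
    Finset (Fin k → G) :=
  S.filter fun x => Function.Injective x

/-!
Write `n = |G|`, regard the solutions as a `k`-uniform ordered hypergraph on `G`, and let `k ≥ 3`.
The independent sets are counted by the container method, which takes two inputs. Since each `r j`
is coprime to `n`, any `k - 1` entries of a solution determine the last one, so `m` prescribed
entries extend to at most `n ^ (k - 1 - m)` solutions, a sharp enough bound at the scale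
`p = n ^ ((k - 2) / (k - 1))`. Supersaturation holds because the exponent divides `r`: for every `a ∈ A` and
`u ∈ G` the walk `u, u * a ^ r₀, u * a ^ (r₀ + r₁), …` closes up, and no two of these `n * |A|`
closed walks share their `i`-th step. A removal argument based on Szemerédi's regularity lemma turns
them, when `A` is dense, into a positive proportion of all the closed walks with steps in powers of
elements of `A`, and such walks from a fixed vertex are exactly the solutions in `A`. Every
independent set of size `t` is then determined by a fingerprint of `O(n ^ (1 / (k - 1)))` elements
up to a container of size a small multiple of `β ^ 2 * n`, and there are few such sets.
-/

/-- An algorithm reading a finite set `I`: it outputs a fingerprint `print I ⊆ I` and a value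
`value I`, and both are determined by the fingerprint in the sense that they do not change when `I`
shrinks to a set still containing it. -/
structure ContainerScheme (V S : Type*) where
  print : Finset V → Finset V
  value : Finset V → S
  print_subset : ∀ I, print I ⊆ I
  stable : ∀ {I J}, print I ⊆ J → J ⊆ I → print J = print I ∧ value J = value I

namespace ContainerScheme

variable {V S S' : Type*}

/-- The scheme with constant value `a` and empty fingerprints. -/
def pure (a : S) : ContainerScheme V S where
  print _ := ∅
  value _ := a
  print_subset _ := empty_subset _
  stable _ _ := ⟨rfl, rfl⟩

instance [Inhabited S] : Inhabited (ContainerScheme V S) := ⟨pure default⟩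

/-- The scheme running `A` and then the scheme selected by the value of `A`. -/
noncomputable def bind (A : ContainerScheme V S) (B : S → ContainerScheme V S') :
    ContainerScheme V S' where
  print I := A.print I ∪ (B (A.value I)).print I
  value I := (B (A.value I)).value I
  print_subset I := union_subset (A.print_subset I) ((B _).print_subset I)
  stable {I J} hIJ hJI := by
    obtain ⟨hA, hB⟩ := union_subset_iff.1 hIJ
    obtain ⟨eA, eA'⟩ := A.stable hA hJI
    obtain ⟨eB, eB'⟩ := (B (A.value I)).stable hB hJI
    simp only [eA, eA', eB, eB', and_self]

lemma card_print_bind_le (A : ContainerScheme V S) (B : S → ContainerScheme V S') (I : Finset V) :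
    #((A.bind B).print I) ≤ #(A.print I) + #((B (A.value I)).print I) :=
  card_union_le _ _

-- Ties are broken by a well-order on `V`, so that the maximiser is unique and survives shrinking.
lemma exists_argmax [Nonempty V] (d : V → ℕ) : ∃ A : ContainerScheme V V,
    ∀ I : Finset V, I.Nonempty →
      A.value I ∈ I ∧ A.print I = {A.value I} ∧ ∀ u ∈ I, d u ≤ d (A.value I) := by
  let _ : LinearOrder V := WellOrderingRel.isWellOrder.linearOrder
  let key : V → ℕ ×ₗ V := fun v => toLex (d v, v)
  have key_inj : Function.Injective key := fun u v h => congrArg (fun x => (ofLex x).2) h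
  have hmax (I : Finset V) (hI : I.Nonempty) : ∃ v ∈ I, ∀ u ∈ I, key u ≤ key v :=
    I.exists_max_image key hI
  choose! top top_mem le_top using hmax
  have top_eq {I J : Finset V} (hI : top I ∈ J) (hJI : J ⊆ I) : top J = top I := by
    have hJ := top_mem J ⟨_, hI⟩
    exact key_inj (le_antisymm (le_top I ⟨_, hJI hJ⟩ _ (hJI hJ)) (le_top J ⟨_, hI⟩ _ hI))
  refine ⟨⟨fun I => if I.Nonempty then {top I} else ∅, top, fun I => ?_, fun {I J} hIJ hJI => ?_⟩,
    fun I hI => ⟨top_mem I hI, if_pos hI, fun u hu => ?_⟩⟩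
  · split_ifs with hI
    exacts [singleton_subset_iff.2 (top_mem I hI), empty_subset _]
  · obtain rfl | hI := I.eq_empty_or_nonempty
    · simp [subset_empty.1 hJI]
    · have hJ : top I ∈ J := by simpa [hI] using hIJ
      simp [hI, show J.Nonempty from ⟨_, hJ⟩, top_eq hJ hJI]
  · exact (Prod.Lex.toLex_le_toLex.1 (le_top I hI u hu)).elim le_of_lt fun h => h.1.le

lemma exists_iterate {P : Finset V → Prop} {q : ℕ} {a b : ℝ}
    (h_step : ∀ A : Finset V, b ≤ #A → ∃ R : ContainerScheme V (Finset V), ∀ I, P I →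
      #(R.print I) ≤ q ∧ R.value I ⊆ A ∧ Disjoint I (R.value I) ∧ a ≤ #(R.value I))
    (m : ℕ) (A : Finset V) (hA : #A ≤ b + m * a) :
    ∃ B : ContainerScheme V (Finset V), ∀ I, P I → I ⊆ A →
      #(B.print I) ≤ m * q ∧ I ⊆ B.value I ∧ #(B.value I) ≤ b := by
  induction m generalizing A with
  | zero => exact ⟨.pure A, fun I _ hIA => ⟨Nat.zero_le _, hIA, by simpa [pure] using hA⟩⟩
  | succ m ih =>
    rcases le_or_gt b #A with h_big | h_small
    · obtain ⟨R, hR⟩ := h_step A h_big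
      choose! B hB using ih
      refine ⟨R.bind fun D => B (A \ D), fun I hI hIA => ?_⟩
      obtain ⟨h_print, h_sub, h_disj, h_card⟩ := hR I hI
      have h_sdiff : (#(A \ R.value I) : ℝ) ≤ b + m * a := by
        rw [cast_card_sdiff h_sub]
        push_cast at hA
        linarith
      obtain ⟨h_print', h_sub', h_card'⟩ :=
        hB _ h_sdiff I hI (subset_sdiff.2 ⟨hIA, h_disj⟩)
      exact ⟨(R.card_print_bind_le _ I).trans (by lia), h_sub', h_card'⟩
    · exact ⟨.pure A, fun I _ hIA => ⟨Nat.zero_le _, hIA, h_small.le⟩⟩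

end ContainerScheme

section Hypergraphs

variable {V : Type*} {j : ℕ}

/-- The number of edges of the ordered hypergraph `H` that agree with `z` on the coordinates
in `T`. -/
noncomputable def codegree (H : Finset (Fin j → V)) (T : Finset (Fin j)) (z : Fin j → V) : ℕ :=
  #{x ∈ H | ∀ i ∈ T, x i = z i}

/-- The degree condition of the container method: every set of `m ≥ 1` prescribed coordinates
extends to at most `D m` edges. -/
def CodegreeLE (H : Finset (Fin j → V)) (D : ℕ → ℝ) : Prop :=
  ∀ T : Finset (Fin j), T.Nonempty → ∀ z, (codegree H T z : ℝ) ≤ D #T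

/-- `I` is an independent set of `H`: it contains all vertices of no edge. -/
def IsIndep (H : Finset (Fin j → V)) (I : Finset V) : Prop :=
  ∀ x ∈ H, ¬ ∀ i, x i ∈ I

/-- The edges of `H` all of whose vertices lie in `A`. -/
noncomputable def edgesIn (H : Finset (Fin j → V)) (A : Finset V) : Finset (Fin j → V) :=
  {x ∈ H | ∀ i, x i ∈ A}

/-- The set of vertices of `H` that lie on some edge. -/
noncomputable def support (H : Finset (Fin j → V)) : Finset V :=
  H.biUnion fun x => univ.image x

lemma mem_support {H : Finset (Fin j → V)} {v : V} : v ∈ support H ↔ ∃ x ∈ H, ∃ i, x i = v := by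
  simp [support]

lemma codegree_mono {h h' : Finset (Fin j → V)} (hh : h ⊆ h') (T : Finset (Fin j)) (z : Fin j → V) :
    codegree h T z ≤ codegree h' T z :=
  card_le_card (filter_subset_filter _ hh)

lemma codegree_congr {T : Finset (Fin j)} {y z : Fin j → V} (hyz : ∀ i ∈ T, y i = z i)
    (H : Finset (Fin j → V)) : codegree H T y = codegree H T z :=
  congrArg card <| filter_congr fun _ _ => forall₂_congr fun i hi => by rw [hyz i hi]

lemma codegree_union_le (h h' : Finset (Fin j → V)) (T : Finset (Fin j)) (z : Fin j → V) :
    codegree (h ∪ h') T z ≤ codegree h T z + codegree h' T z := by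
  unfold codegree
  rw [filter_union]
  exact card_union_le _ _

lemma CodegreeLE.mono {h h' : Finset (Fin j → V)} {D : ℕ → ℝ} (hD : CodegreeLE h' D)
    (hh : h ⊆ h') : CodegreeLE h D := fun T hT z =>
  (Nat.cast_le.2 (codegree_mono hh T z)).trans (hD T hT z)

lemma CodegreeLE.congr {H : Finset (Fin j → V)} {D D' : ℕ → ℝ} (hD : CodegreeLE H D)
    (h : ∀ m, D m = D' m) : CodegreeLE H D' := funext h ▸ hD

lemma codegreeLE_empty {D : ℕ → ℝ} (hD : ∀ m, 0 ≤ D m) :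
    CodegreeLE (∅ : Finset (Fin j → V)) D := fun T _ z => by
  simpa [codegree] using hD #T

lemma IsIndep.edgesIn {H : Finset (Fin j → V)} {I : Finset V} (hI : IsIndep H I) (A : Finset V) :
    IsIndep (edgesIn H A) I := fun x hx => hI x (mem_filter.1 hx).1

lemma support_edgesIn_subset (H : Finset (Fin j → V)) (A : Finset V) :
    support (edgesIn H A) ⊆ A := by
  intro v hv
  obtain ⟨x, hx, i, rfl⟩ := mem_support.1 hv
  exact (mem_filter.1 hx).2 i

lemma card_le_card_support (H : Finset (Fin 1 → V)) : #H ≤ #(support H) :=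
  card_le_card_of_injOn (fun x => x 0) (fun x hx => mem_support.2 ⟨x, hx, 0, rfl⟩)
    fun _ _ _ _ hxy => funext fun i => Subsingleton.elim 0 i ▸ hxy

/-- `y` may not be added to the hypergraph `h` any more: it is present already, or it agrees with
at least `thr #T` edges of `h` on some nonempty set `T` of coordinates. -/
def Saturated (thr : ℕ → ℝ) (h : Finset (Fin j → V)) (y : Fin j → V) : Prop :=
  y ∈ h ∨ ∃ T : Finset (Fin j), T.Nonempty ∧ thr #T ≤ codegree h T y

lemma Saturated.mono {thr : ℕ → ℝ} {h h' : Finset (Fin j → V)} {y : Fin j → V} (hh : h ⊆ h') :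
    Saturated thr h y → Saturated thr h' y :=
  Or.imp (fun hy => hh hy) fun ⟨T, hT, hy⟩ =>
    ⟨T, hT, hy.trans (Nat.cast_le.2 (codegree_mono hh T y))⟩

-- Double counting of the pairs of an edge of `H` and a member of `h` that agree on `T`.
lemma card_codegree_ge_mul_le {D : ℕ → ℝ} {H : Finset (Fin (j + 1) → V)} (hD : CodegreeLE H D)
    (h : Finset (Fin j → V)) {T : Finset (Fin j)} (hT : T.Nonempty) (θ : ℝ) :
    #{x ∈ H | θ ≤ codegree h T (Fin.tail x)} * θ ≤ #h * D #T := by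
  have ⟨i₀, _⟩ := hT
  have key := card_nsmul_le_card_nsmul (m := θ) (n := D #T)
    (s := {x ∈ H | θ ≤ codegree h T (Fin.tail x)}) (t := h)
    (fun x y => ∀ i ∈ T, y i = Fin.tail x i)
    (fun x hx => by simpa [codegree, bipartiteAbove] using (mem_filter.1 hx).2) fun y _ => ?_
  · simpa only [nsmul_eq_mul] using key
  · have h_codeg := hD (T.map (Fin.succEmb j)) (hT.map) (Fin.cons (y i₀) y)
    rw [card_map] at h_codeg
    refine le_trans (Nat.cast_le.2 (card_le_card fun x hx => ?_)) h_codeg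
    obtain ⟨hx, hxy⟩ := mem_filter.1 hx
    refine mem_filter.2 ⟨(mem_filter.1 hx).1, Finset.forall_mem_map.2 fun i hi => ?_⟩
    simpa [Fin.tail] using (hxy i hi).symm

lemma card_tail_mem_le {D : ℕ → ℝ} {H : Finset (Fin (j + 2) → V)} (hD : CodegreeLE H D)
    (h : Finset (Fin (j + 1) → V)) :
    (#{x ∈ H | (Fin.tail x : Fin (j + 1) → V) ∈ h} : ℝ) ≤ #h * D (j + 1) := by
  have key := card_codegree_ge_mul_le hD h univ_nonempty 1
  rw [mul_one, card_univ, Fintype.card_fin] at key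
  refine le_trans (Nat.cast_le.2 (card_le_card ?_)) key
  refine monotone_filter_right H fun x _ hx => ?_
  exact_mod_cast card_pos.2 ⟨Fin.tail x, mem_filter.2 ⟨hx, fun _ _ => rfl⟩⟩

lemma card_saturated_le {thr D : ℕ → ℝ} (hthr : ∀ m, 0 < thr m) {H : Finset (Fin (j + 2) → V)}
    (hD : CodegreeLE H D) (h : Finset (Fin (j + 1) → V)) :
    (#{x ∈ H | Saturated thr h (Fin.tail x)} : ℝ) ≤
      #h * D (j + 1) + ∑ T : Finset (Fin (j + 1)) with T.Nonempty, #h * D #T / thr #T := by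
  have h_cover : {x ∈ H | Saturated thr h (Fin.tail x)} ⊆
      {x ∈ H | (Fin.tail x : Fin (j + 1) → V) ∈ h} ∪
      ({T : Finset (Fin (j + 1)) | T.Nonempty} : Finset _).biUnion
        fun T => {x ∈ H | thr #T ≤ codegree h T (Fin.tail x)} := by
    intro x hx
    obtain ⟨hxH, hx | ⟨T, hT, hx⟩⟩ := mem_filter.1 hx
    · exact mem_union_left _ (mem_filter.2 ⟨hxH, hx⟩)
    · exact mem_union_right _ (mem_biUnion.2
        ⟨T, mem_filter.2 ⟨mem_univ _, hT⟩, mem_filter.2 ⟨hxH, hx⟩⟩)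
  refine (Nat.cast_le.2 ((card_le_card h_cover).trans (card_union_le _ _))).trans ?_
  rw [Nat.cast_add]
  refine add_le_add (card_tail_mem_le hD h) ((Nat.cast_le.2 card_biUnion_le).trans ?_)
  rw [Nat.cast_sum]
  refine sum_le_sum fun T hT => ?_
  rw [le_div_iff₀ (hthr _)]
  exact card_codegree_ge_mul_le hD h (mem_filter.1 hT).2 _

variable [Fintype V]

/-- The link of `v` in `H` (through the coordinate `0`), without the tuples saturated in `h`. -/
noncomputable def freshLink (thr : ℕ → ℝ) (H : Finset (Fin (j + 1) → V))
    (h : Finset (Fin j → V)) (v : V) : Finset (Fin j → V) :=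
  {y | Fin.cons v y ∈ H ∧ ¬ Saturated thr h y}

lemma mem_freshLink {thr : ℕ → ℝ} {H : Finset (Fin (j + 1) → V)} {h : Finset (Fin j → V)}
    {v : V} {y : Fin j → V} :
    y ∈ freshLink thr H h v ↔ (Fin.cons v y : Fin (j + 1) → V) ∈ H ∧ ¬ Saturated thr h y := by
  simp [freshLink]

lemma freshLink_anti {thr : ℕ → ℝ} {h h' : Finset (Fin j → V)} (hh : h ⊆ h')
    (H : Finset (Fin (j + 1) → V)) (v : V) : freshLink thr H h' v ⊆ freshLink thr H h v :=
  fun _ hy => mem_freshLink.2 ((mem_freshLink.1 hy).imp_right (mt (Saturated.mono hh)))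

lemma disjoint_freshLink (thr : ℕ → ℝ) (H : Finset (Fin (j + 1) → V)) (h : Finset (Fin j → V))
    (v : V) : Disjoint h (freshLink thr H h v) :=
  Finset.disjoint_left.2 fun _ hy hy' => (mem_freshLink.1 hy').2 (Or.inl hy)

lemma codegree_freshLink_le (thr : ℕ → ℝ) (H : Finset (Fin (j + 1) → V))
    (h : Finset (Fin j → V)) (v : V) (T : Finset (Fin j)) (z : Fin j → V) :
    codegree (freshLink thr H h v) T z ≤
      codegree H (insert 0 (T.map (Fin.succEmb j))) (Fin.cons v z) := by
  refine card_le_card_of_injOn (fun y => Fin.cons v y) (fun y hy => ?_)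
    (Fin.cons_right_injective (α := fun _ => V) v).injOn
  obtain ⟨hyH, hyz⟩ := mem_filter.1 hy
  refine mem_filter.2 ⟨(mem_freshLink.1 hyH).1, ?_⟩
  simpa using hyz

lemma card_insert_zero_map_succ (T : Finset (Fin j)) :
    #(insert 0 (T.map (Fin.succEmb j))) = #T + 1 := by
  rw [card_insert_of_notMem (by simp [Fin.succ_ne_zero]), card_map]

lemma card_freshLink_le {H : Finset (Fin (j + 1) → V)} {D : ℕ → ℝ} (hD : CodegreeLE H D)
    (thr : ℕ → ℝ) (h : Finset (Fin j → V)) (v : V) : (#(freshLink thr H h v) : ℝ) ≤ D 1 := by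
  have key := hD {0} (singleton_nonempty 0) fun _ => v
  refine le_trans (Nat.cast_le.2 ?_) key
  refine card_le_card_of_injOn (fun y => Fin.cons v y) (fun y hy => ?_)
    (Fin.cons_right_injective (α := fun _ => V) v).injOn
  exact mem_filter.2 ⟨(mem_freshLink.1 hy).1, by simp⟩

-- If the fresh link meets the class of `z` at all, unsaturation bounds the old codegree there.
lemma CodegreeLE.union_freshLink {thr D : ℕ → ℝ} {H : Finset (Fin (j + 1) → V)}
    (hD : CodegreeLE H D) {h : Finset (Fin j → V)}
    (hh : CodegreeLE h fun m => thr m + D (m + 1)) (v : V) :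
    CodegreeLE (h ∪ freshLink thr H h v) fun m => thr m + D (m + 1) := by
  intro T hT z
  have h_union := codegree_union_le h (freshLink thr H h v) T z
  by_cases hex : ∃ y ∈ freshLink thr H h v, ∀ i ∈ T, y i = z i
  · obtain ⟨y, hy, hyz⟩ := hex
    have h_old : (codegree h T z : ℝ) ≤ thr #T := by
      by_contra! hlt
      exact (mem_freshLink.1 hy).2 (Or.inr ⟨T, hT, codegree_congr hyz h ▸ hlt.le⟩)
    have h_new : (codegree (freshLink thr H h v) T z : ℝ) ≤ D (#T + 1) := by
      rw [← card_insert_zero_map_succ]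
      exact (Nat.cast_le.2 (codegree_freshLink_le thr H h v T z)).trans
        (hD _ (insert_nonempty _ _) _)
    calc (codegree (h ∪ freshLink thr H h v) T z : ℝ)
        ≤ codegree h T z + codegree (freshLink thr H h v) T z := mod_cast h_union
      _ ≤ thr #T + D (#T + 1) := add_le_add h_old h_new
  · push Not at hex
    have h_new : codegree (freshLink thr H h v) T z = 0 :=
      card_eq_zero.2 (filter_eq_empty_iff.2 fun y hy => by simpa using hex y hy)
    rw [h_new, add_zero] at h_union
    exact (Nat.cast_le.2 h_union).trans (hh T hT z)

-- Always pick the vertex with the largest fresh link: fresh links only shrink, so either a gain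
-- is at most `b` at some point, and then all later ones are, or all gains exceed `b`.
lemma exists_greedy_scheme [Nonempty V] {thr D : ℕ → ℝ} {H : Finset (Fin (j + 1) → V)}
    (hD : CodegreeLE H D) (b : ℝ) (N : ℕ) (h : Finset (Fin j → V))
    (hh : CodegreeLE h fun m => thr m + D (m + 1)) :
    ∃ A : ContainerScheme V (Finset (Fin j → V)), ∀ I : Finset V, I.Nonempty →
      #(A.print I) ≤ N ∧ h ⊆ A.value I ∧
      (∀ y ∈ A.value I, y ∈ h ∨ ∃ v ∈ I, (Fin.cons v y : Fin (j + 1) → V) ∈ H) ∧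
      CodegreeLE (A.value I) (fun m => thr m + D (m + 1)) ∧
      ((∀ v ∈ I, (#(freshLink thr H (A.value I) v) : ℝ) ≤ b) ∨
        (#h : ℝ) + N * b ≤ #(A.value I)) := by
  induction N generalizing h with
  | zero => exact ⟨.pure h, fun I _ =>
      ⟨le_rfl, Subset.rfl, fun y hy => Or.inl hy, hh, Or.inr (by simp [ContainerScheme.pure])⟩⟩
  | succ N ih =>
    obtain ⟨A, hA⟩ := ContainerScheme.exists_argmax fun v => #(freshLink thr H h v)
    choose B hB using fun v => ih (h ∪ freshLink thr H h v) (hD.union_freshLink hh v)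
    refine ⟨A.bind B, fun I hI => ?_⟩
    obtain ⟨hv, h_print, h_max⟩ := hA I hI
    obtain ⟨h_card, h_sub, h_mem, h_codeg, h_gain⟩ := hB (A.value I) I hI
    set v := A.value I
    have h_sub' : h ⊆ (B v).value I := subset_union_left.trans h_sub
    refine ⟨(A.card_print_bind_le B I).trans ?_, h_sub', fun y hy => ?_, h_codeg, ?_⟩
    · rw [h_print, card_singleton]
      lia
    · rcases h_mem y hy with hy | hy
      · exact (mem_union.1 hy).imp_right fun hy => ⟨v, hv, (mem_freshLink.1 hy).1⟩
      · exact Or.inr hy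
    · by_cases hb : (#(freshLink thr H h v) : ℝ) ≤ b
      · refine Or.inl fun u hu => le_trans (Nat.cast_le.2 ?_) hb
        exact (card_le_card (freshLink_anti h_sub' H u)).trans (h_max u hu)
      · refine h_gain.imp_right fun h_gain => le_trans ?_ h_gain
        rw [card_union_of_disjoint (disjoint_freshLink thr H h v)]
        push_cast
        linarith

/-- The vertices whose fresh link has more than `b` members. -/
noncomputable def heavyVertices (thr : ℕ → ℝ) (H : Finset (Fin (j + 1) → V))
    (h : Finset (Fin j → V)) (b : ℝ) : Finset V :=
  {v | b < #(freshLink thr H h v)}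

lemma mem_heavyVertices {thr : ℕ → ℝ} {H : Finset (Fin (j + 1) → V)} {h : Finset (Fin j → V)}
    {b : ℝ} {v : V} : v ∈ heavyVertices thr H h b ↔ b < #(freshLink thr H h v) := by
  simp [heavyVertices]

lemma heavyVertices_subset_support (thr : ℕ → ℝ) (H : Finset (Fin (j + 1) → V))
    (h : Finset (Fin j → V)) {b : ℝ} (hb : 0 ≤ b) : heavyVertices thr H h b ⊆ support H := by
  intro v hv
  have h_card : 0 < #(freshLink thr H h v) := by
    exact_mod_cast hb.trans_lt (mem_heavyVertices.1 hv)
  obtain ⟨y, hy⟩ := card_pos.1 h_card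
  exact mem_support.2 ⟨_, (mem_freshLink.1 hy).1, 0, rfl⟩

lemma sum_card_freshLink (thr : ℕ → ℝ) (H : Finset (Fin (j + 1) → V))
    (h : Finset (Fin j → V)) :
    ∑ v, #(freshLink thr H h v) = #{x ∈ H | ¬ Saturated thr h (Fin.tail x)} := by
  rw [card_eq_sum_card_fiberwise (f := fun x : Fin (j + 1) → V => x 0) (t := univ)
    fun _ _ => mem_coe.2 (mem_univ _)]
  refine sum_congr rfl fun v _ => ?_
  refine card_nbij' (fun y => Fin.cons v y) Fin.tail (fun y hy => ?_) (fun x hx => ?_)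
    (fun y _ => Fin.tail_cons _ _) fun x hx => ?_
  · simpa using mem_freshLink.1 hy
  · obtain ⟨hx, rfl⟩ := mem_filter.1 hx
    simpa [mem_freshLink] using hx
  · obtain ⟨_, rfl⟩ := mem_filter.1 hx
    exact Fin.cons_self_tail x

lemma sum_card_freshLink_le {thr D : ℕ → ℝ} {H : Finset (Fin (j + 1) → V)}
    (hD : CodegreeLE H D) (h : Finset (Fin j → V)) {b : ℝ} (hb : 0 ≤ b) :
    (∑ v, (#(freshLink thr H h v) : ℝ)) ≤ #(heavyVertices thr H h b) * D 1 + Fintype.card V * b :=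
  calc ∑ v, (#(freshLink thr H h v) : ℝ)
      ≤ ∑ v, ((if v ∈ heavyVertices thr H h b then D 1 else 0) + b) := by
        refine sum_le_sum fun v _ => ?_
        split_ifs with hv
        · exact le_add_of_le_of_nonneg (card_freshLink_le hD thr h v) hb
        · simpa [mem_heavyVertices] using hv
    _ = #(heavyVertices thr H h b) * D 1 + Fintype.card V * b := by
        simp [sum_add_distrib]

lemma card_le_card_heavyVertices {thr D : ℕ → ℝ} (hthr : ∀ m, 0 < thr m)
    {H : Finset (Fin (j + 2) → V)} (hD : CodegreeLE H D) (h : Finset (Fin (j + 1) → V))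
    {b : ℝ} (hb : 0 ≤ b) :
    (#H : ℝ) ≤ #h * D (j + 1) + ∑ T : Finset (Fin (j + 1)) with T.Nonempty, #h * D #T / thr #T +
      (#(heavyVertices thr H h b) * D 1 + Fintype.card V * b) := by
  rw [← card_filter_add_card_filter_not (s := H) fun x => Saturated thr h (Fin.tail x),
    ← sum_card_freshLink]
  push_cast
  exact add_le_add (card_saturated_le hthr hD h) (sum_card_freshLink_le hD h hb)

end Hypergraphs

section Containers

/-- The hypothesis of the container method at scale `p`: with `c` and `K` regarded as constants,
the `(j + 1)`-uniform hypergraph `H` has at least about `p ^ j * |V|` edges, and `m ≥ 1` prescribed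
coordinates extend to at most about `p ^ (j + 1 - m)` edges. -/
structure BalancedAtScale {V : Type*} [Fintype V] {j : ℕ} (c K p : ℝ)
    (H : Finset (Fin (j + 1) → V)) : Prop where
  le_card : c * p ^ j * Fintype.card V ≤ #H
  codegreeLE : CodegreeLE H fun m => K * p ^ (j + 1 - m)

/-- The saturation threshold for `m` prescribed coordinates of the link of a `(j + 2)`-uniform
hypergraph; the power of two pays for a union bound over all sets of coordinates. -/
def threshold (j : ℕ) (κ K p : ℝ) (m : ℕ) : ℝ :=
  2 ^ (j + 3) * κ * K * p ^ (j + 1 - m)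

lemma threshold_pos {κ K p : ℝ} (hκ : 0 < κ) (hK : 0 < K) (hp : 0 < p) (j m : ℕ) :
    0 < threshold j κ K p m := by
  unfold threshold
  positivity

lemma sum_saturation_le (j : ℕ) {κ K p N a : ℝ} (hκ : 0 < κ) (hK : 0 < K) (hp : 0 < p)
    (hN : 0 ≤ N) (ha : a ≤ κ * N / p) :
    ∑ T : Finset (Fin (j + 1)) with T.Nonempty,
      a * (K * p ^ (j + 2 - #T)) / threshold j κ K p #T ≤ N / 4 := by
  have h_term (T : Finset (Fin (j + 1))) :
      a * (K * p ^ (j + 2 - #T)) / threshold j κ K p #T ≤ N / 2 ^ (j + 3) := by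
    have hT : #T ≤ j + 1 := by simpa using card_le_univ T
    rw [div_le_div_iff₀ (threshold_pos hκ hK hp j _) (by positivity), threshold,
      show j + 2 - #T = j + 1 - #T + 1 by lia, pow_succ]
    rw [le_div_iff₀ hp] at ha
    calc a * (K * (p ^ (j + 1 - #T) * p)) * 2 ^ (j + 3)
        = a * p * (K * p ^ (j + 1 - #T) * 2 ^ (j + 3)) := by ring
      _ ≤ κ * N * (K * p ^ (j + 1 - #T) * 2 ^ (j + 3)) := by gcongr
      _ = N * (2 ^ (j + 3) * κ * K * p ^ (j + 1 - #T)) := by ring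
  have h_card : #{T : Finset (Fin (j + 1)) | T.Nonempty} ≤ 2 ^ (j + 1) :=
    (card_filter_le _ _).trans (by simp)
  calc ∑ T : Finset (Fin (j + 1)) with T.Nonempty,
        a * (K * p ^ (j + 2 - #T)) / threshold j κ K p #T
      ≤ #{T : Finset (Fin (j + 1)) | T.Nonempty} • (N / 2 ^ (j + 3)) :=
        sum_le_card_nsmul _ _ _ fun T _ => h_term T
    _ ≤ (2 ^ (j + 1) : ℕ) • (N / 2 ^ (j + 3)) := by gcongr
    _ = N / 4 := by
        rw [nsmul_eq_mul, pow_add, pow_add]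
        push_cast
        field_simp
        ring

variable {V : Type*} [Fintype V] {j s : ℕ} {c κ K p b : ℝ}

lemma le_card_heavyVertices (hκ : 0 < κ) (hκ4 : κ ≤ 1 / 4) (hK : 0 < K) (hκK : κ * K ≤ 1 / 4)
    (hp : 0 < p) {H : Finset (Fin (j + 2) → V)} (hH : BalancedAtScale c K p H)
    {h : Finset (Fin (j + 1) → V)} (hh : #h ≤ κ * #H / p) (hb : 0 ≤ b)
    (hb_card : Fintype.card V * b ≤ κ * #H) :
    c / (4 * K) * Fintype.card V ≤ #(heavyVertices (threshold j κ K p) H h b) := by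
  have key := card_le_card_heavyVertices (threshold_pos hκ hK hp j) hH.codegreeLE h hb
  have h_sum := sum_saturation_le j hκ hK hp (Nat.cast_nonneg #H) hh
  have h_tail : #h * (K * p) ≤ (#H : ℝ) / 4 := by
    rw [le_div_iff₀ hp] at hh
    calc #h * (K * p) = #h * p * K := by ring
      _ ≤ κ * #H * K := by gcongr
      _ = κ * K * #H := by ring
      _ ≤ 1 / 4 * #H := by gcongr
      _ = #H / 4 := by ring
  have h_light : κ * #H ≤ 1 / 4 * #H := by gcongr
  have h_card := hH.le_card
  simp only [show j + 1 + 1 - (j + 1) = 1 by lia, Nat.add_sub_cancel, pow_one] at key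
  set R := #(heavyVertices (threshold j κ K p) H h b)
  have h_edges : c * p ^ (j + 1) * Fintype.card V ≤ R * (4 * K) * p ^ (j + 1) := by linarith
  rw [div_mul_eq_mul_div, div_le_iff₀ (by positivity)]
  exact le_of_mul_le_mul_right (by linarith [h_edges]) (pow_pos hp (j + 1))

-- The greedy scheme with `s` picks of gain `κ * |H| / (p * s)`: if it succeeds, the link built so
-- far is balanced again, and if it gets stuck, all heavy vertices are avoided.
lemma exists_link_scheme [Nonempty V] (hκ : 0 < κ) (hκ4 : κ ≤ 1 / 4) (hK : 0 < K)
    (hκK : κ * K ≤ 1 / 4) (hp : 0 < p) (hs : Fintype.card V ≤ p * s) {H : Finset (Fin (j + 2) → V)}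
    (hH : BalancedAtScale c K p H) :
    ∃ (A : ContainerScheme V (Finset (Fin (j + 1) → V)))
      (R : Finset (Fin (j + 1) → V) → Finset V), ∀ I : Finset V, I.Nonempty → IsIndep H I →
      #(A.print I) ≤ s ∧ IsIndep (A.value I) I ∧ support (A.value I) ⊆ support H ∧
      (BalancedAtScale (κ * c) ((2 ^ (j + 3) * κ + 1) * K) p (A.value I) ∨
        R (A.value I) ⊆ support H ∧ Disjoint I (R (A.value I)) ∧
        c / (4 * K) * Fintype.card V ≤ #(R (A.value I))) := by
  have hs_pos : (0 : ℝ) < s :=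
    pos_of_mul_pos_right ((Nat.cast_pos.2 Fintype.card_pos).trans_le hs) hp.le
  set b : ℝ := κ * #H / p / s
  have hb : 0 ≤ b := by positivity
  have hb_mul : s * b = κ * #H / p := mul_div_cancel₀ _ hs_pos.ne'
  have hb_card : Fintype.card V * b ≤ κ * #H :=
    calc Fintype.card V * b ≤ p * s * b := by gcongr
      _ = κ * #H := by rw [mul_assoc, hb_mul, mul_div_cancel₀ _ hp.ne']
  obtain ⟨A, hA⟩ := exists_greedy_scheme hH.codegreeLE b s ∅ <| codegreeLE_empty fun m =>
    add_nonneg (threshold_pos hκ hK hp j m).le (by positivity)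
  refine ⟨A, fun h => heavyVertices (threshold j κ K p) H h b, fun I hI hHI => ?_⟩
  obtain ⟨h_print, -, h_mem, h_codeg, h_gain⟩ := hA I hI
  replace h_mem : ∀ y ∈ A.value I, ∃ v ∈ I, (Fin.cons v y : Fin (j + 2) → V) ∈ H := by
    simpa using h_mem
  rw [card_empty, Nat.cast_zero, zero_add, hb_mul] at h_gain
  refine ⟨h_print, fun y hy hyI => ?_, fun u hu => ?_, ?_⟩
  · obtain ⟨v, hv, hvy⟩ := h_mem y hy
    exact hHI _ hvy (Fin.cases hv hyI)
  · obtain ⟨y, hy, i, rfl⟩ := mem_support.1 hu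
    obtain ⟨v, -, hvy⟩ := h_mem y hy
    exact mem_support.2 ⟨_, hvy, i.succ, rfl⟩
  · rcases le_or_gt (κ * #H / p) #(A.value I) with h_big | h_small
    · refine Or.inl ⟨le_trans ?_ h_big, h_codeg.congr fun m => ?_⟩
      · rw [le_div_iff₀ hp]
        calc κ * c * p ^ j * Fintype.card V * p = κ * (c * p ^ (j + 1) * Fintype.card V) := by ring
          _ ≤ κ * #H := by gcongr; exact hH.le_card
      · rw [threshold, show j + 2 - (m + 1) = j + 1 - m by lia]
        ring
    · refine Or.inr ⟨heavyVertices_subset_support _ H _ hb,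
        Finset.disjoint_left.2 fun v hv hv' => ?_,
        le_card_heavyVertices hκ hκ4 hK hκK hp hH h_small.le hb hb_card⟩
      exact (mem_heavyVertices.1 hv').not_ge (h_gain.resolve_right h_small.not_ge v hv)

-- Passing to a balanced link lowers the uniformity; in uniformity one, the edges of `H` are
-- vertices that no independent set contains.
lemma exists_avoided_scheme (j : ℕ) {c K : ℝ} (hc : 0 < c) (hK : 0 < K) : ∃ c' : ℝ, 0 < c' ∧
    ∀ (V : Type*) [Fintype V] [Nonempty V] (H : Finset (Fin (j + 1) → V)) (s : ℕ) (p : ℝ),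
      0 < p → Fintype.card V ≤ p * s → BalancedAtScale c K p H →
      ∃ A : ContainerScheme V (Finset V), ∀ I : Finset V, I.Nonempty → IsIndep H I →
        #(A.print I) ≤ j * s ∧ A.value I ⊆ support H ∧ Disjoint I (A.value I) ∧
        c' * Fintype.card V ≤ #(A.value I) := by
  induction j generalizing c K with
  | zero =>
    refine ⟨c, hc, fun V _ _ H s p _ _ hH => ⟨.pure (support H), fun I _ hI =>
      ⟨Nat.zero_le _, Subset.rfl, Finset.disjoint_left.2 fun v hv hv' => ?_,
        (by simpa using hH.le_card : c * Fintype.card V ≤ #H).trans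
          (Nat.cast_le.2 (card_le_card_support H))⟩⟩⟩
    obtain ⟨x, hx, i, rfl⟩ := mem_support.1 hv'
    exact hI x hx fun i' => Subsingleton.elim (α := Fin 1) i i' ▸ hv
  | succ j ih =>
    set κ : ℝ := min (1 / 4) (1 / (4 * K))
    have hκ : 0 < κ := by positivity
    have hκK : κ * K ≤ 1 / 4 :=
      calc κ * K ≤ 1 / (4 * K) * K := by gcongr; exact min_le_right _ _
        _ = 1 / 4 := by field_simp
    obtain ⟨c', hc', ih⟩ := ih (c := κ * c) (K := (2 ^ (j + 3) * κ + 1) * K) (by positivity)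
      (by positivity)
    refine ⟨min c' (c / (4 * K)), by positivity, fun V _ _ H s p hp hs hH => ?_⟩
    obtain ⟨A, R, hA⟩ := exists_link_scheme hκ (min_le_left _ _) hK hκK hp hs hH
    choose! B hB using fun h => ih V h s p hp hs
    let B' (h : Finset (Fin (j + 1) → V)) : ContainerScheme V (Finset V) :=
      if BalancedAtScale (κ * c) ((2 ^ (j + 3) * κ + 1) * K) p h then B h else .pure (R h)
    refine ⟨A.bind B', fun I hI hHI => ?_⟩
    obtain ⟨h_print, h_indep, h_supp, h_dich⟩ := hA I hI hHI
    have h_bind := A.card_print_bind_le B' I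
    simp only [ContainerScheme.bind, B'] at h_bind ⊢
    split_ifs at h_bind ⊢ with h_bal
    · obtain ⟨h_print', h_supp', h_disj, h_card⟩ := hB (A.value I) h_bal I hI h_indep
      refine ⟨by lia, h_supp'.trans h_supp, h_disj, le_trans ?_ h_card⟩
      gcongr
      exact min_le_left _ _
    · obtain ⟨h_supp', h_disj, h_card⟩ := h_dich.resolve_left h_bal
      refine ⟨?_, h_supp', h_disj, le_trans ?_ h_card⟩
      · simpa [ContainerScheme.pure] using h_print.trans (Nat.le_mul_of_pos_left s j.succ_pos)
      · gcongr
        exact min_le_right _ _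

theorem exists_container_scheme (j : ℕ) {c K ε : ℝ} (hc : 0 < c) (hK : 0 < K) (hε : 0 ≤ ε) :
    ∃ C : ℕ, ∀ (V : Type*) [Fintype V] [Nonempty V] (H : Finset (Fin (j + 1) → V)) (s : ℕ) (p : ℝ),
      0 < p → Fintype.card V ≤ p * s →
      (∀ A : Finset V, ε * Fintype.card V ≤ #A →
        c * p ^ j * Fintype.card V ≤ #(edgesIn H A)) →
      (CodegreeLE H fun m => K * p ^ (j + 1 - m)) →
      ∃ A : ContainerScheme V (Finset V), ∀ I : Finset V, I.Nonempty → IsIndep H I →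
        #(A.print I) ≤ C * s ∧ I ⊆ A.value I ∧ #(A.value I) ≤ ε * Fintype.card V := by
  obtain ⟨c', hc', h_avoid⟩ := exists_avoided_scheme j hc hK
  refine ⟨⌈c'⁻¹⌉₊ * j, fun V _ _ H s p hp hs h_super h_codeg => ?_⟩
  have h_card : (#(univ : Finset V) : ℝ) ≤
      ε * Fintype.card V + ⌈c'⁻¹⌉₊ * (c' * Fintype.card V) := by
    rw [card_univ, ← mul_assoc]
    refine le_add_of_nonneg_of_le (by positivity) (le_mul_of_one_le_left (Nat.cast_nonneg _) ?_)
    rw [← inv_le_iff_one_le_mul₀ hc']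
    exact Nat.le_ceil _
  have h_step (A : Finset V) (hA : ε * Fintype.card V ≤ #A) :=
    h_avoid V (edgesIn H A) s p hp hs ⟨h_super A hA, h_codeg.mono (filter_subset _ _)⟩
  obtain ⟨B, hB⟩ := ContainerScheme.exists_iterate (P := fun I => I.Nonempty ∧ IsIndep H I)
    (fun A hA => (h_step A hA).imp fun R hR I hI => (hR I hI.1 (hI.2.edgesIn A)).imp_right
      (And.imp_left fun h => h.trans (support_edgesIn_subset H A))) _ _ h_card
  refine ⟨B, fun I hI hHI => ?_⟩
  rw [mul_assoc]
  exact hB I ⟨hI, hHI⟩ (subset_univ I)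

end Containers

section Counting

lemma choose_mul_choose_le_choose {n m M S t W : ℕ} (hS : 2 * S ≤ t) (hm : 2 * m ≤ W)
    (hnm : 4 * (n * m) ≤ W * W) (hW : W + t ≤ M + 1) :
    n.choose S * m.choose (t - S) ≤ M.choose t := by
  obtain ⟨a, rfl⟩ := Nat.exists_eq_add_of_le hS
  rw [show 2 * S + a - S = S + a by lia]
  have h_pow : 2 ^ (2 * S + a) * (n ^ S * m ^ (S + a)) ≤ W ^ (2 * S + a) :=
    calc 2 ^ (2 * S + a) * (n ^ S * m ^ (S + a)) = (4 * (n * m)) ^ S * (2 * m) ^ a := by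
          simp only [pow_add, pow_mul, mul_pow]
          ring
      _ ≤ (W * W) ^ S * W ^ a := by gcongr
      _ = W ^ (2 * S + a) := by rw [pow_add, pow_mul, sq]
  refine Nat.le_of_mul_le_mul_left ?_ (Nat.factorial_pos (2 * S + a))
  calc (2 * S + a).factorial * (n.choose S * m.choose (S + a))
      = (2 * S + a).choose S * (n.descFactorial S * m.descFactorial (S + a)) := by
        rw [Nat.descFactorial_eq_factorial_mul_choose, Nat.descFactorial_eq_factorial_mul_choose,
          ← Nat.choose_mul_factorial_mul_factorial (show S ≤ 2 * S + a by lia),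
          show 2 * S + a - S = S + a by lia]
        ring
    _ ≤ 2 ^ (2 * S + a) * (n ^ S * m ^ (S + a)) := by
        gcongr
        exacts [Nat.choose_le_two_pow _ _, Nat.descFactorial_le_pow _ _,
          Nat.descFactorial_le_pow _ _]
    _ ≤ (M + 1 - (2 * S + a)) ^ (2 * S + a) := h_pow.trans (Nat.pow_le_pow_left (by lia) _)
    _ ≤ M.descFactorial (2 * S + a) := Nat.pow_sub_le_descFactorial M (2 * S + a)
    _ = (2 * S + a).factorial * M.choose (2 * S + a) :=
        Nat.descFactorial_eq_factorial_mul_choose M (2 * S + a)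

lemma choose_mul_choose_le_choose_floor {β : ℝ} (hβ1 : β ≤ 1) {n S t : ℕ}
    (hn : 8 ≤ β * n) (hS : 2 * S ≤ t) (ht : t ≤ ⌊β ^ 2 / 64 * n⌋₊) :
    n.choose S * ⌊β ^ 2 / 64 * n⌋₊.choose (t - S) ≤ ⌊β * n⌋₊.choose t := by
  set m := ⌊β ^ 2 / 64 * n⌋₊
  set W := ⌊β * n / 2⌋₊
  have hβ : 0 < β := pos_of_mul_pos_left (by linarith) (Nat.cast_nonneg n)
  have hm : (m : ℝ) ≤ β ^ 2 / 64 * n := Nat.floor_le (by positivity)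
  have hW_le : (W : ℝ) ≤ β * n / 2 := Nat.floor_le (by positivity)
  have hW_ge : β * n / 4 ≤ W := by linarith [Nat.sub_one_lt_floor (β * n / 2)]
  have hmW : 2 * m ≤ W := by
    have h_sq : β ^ 2 * n ≤ β * n := by
      rw [sq, mul_assoc]
      exact mul_le_of_le_one_left (by linarith) hβ1
    exact_mod_cast (by linarith : (2 : ℝ) * m ≤ W)
  have h2W : 2 * W ≤ ⌊β * n⌋₊ := Nat.le_floor (by push_cast; linarith)
  refine choose_mul_choose_le_choose hS hmW ?_ (by lia)
  have h_real : (4 : ℝ) * (n * m) ≤ W * W :=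
    calc (4 : ℝ) * (n * m) ≤ 4 * (n * (β ^ 2 / 64 * n)) := by gcongr
      _ = β * n / 4 * (β * n / 4) := by ring
      _ ≤ W * W := by gcongr
  exact_mod_cast h_real

variable {V : Type*} [Fintype V]

lemma ContainerScheme.card_filter_le (A : ContainerScheme V (Finset V)) (P : Finset V → Prop)
    {S t m : ℕ} (hSt : S ≤ t)
    (hA : ∀ I, #I = t → P I → #(A.print I) ≤ S ∧ I ⊆ A.value I ∧ #(A.value I) ≤ m) :
    #{X : Finset V | #X = t ∧ P X} ≤ (Fintype.card V).choose S * m.choose (t - S) := by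
  have h_mid (X : Finset V) (hX : #X = t ∧ P X) : ∃ J, A.print X ⊆ J ∧ J ⊆ X ∧ #J = S :=
    exists_subsuperset_card_eq (A.print_subset X) (hA X hX.1 hX.2).1 (hX.1 ▸ hSt)
  choose! J h_print h_sub h_card using h_mid
  have h_value {X : Finset V} (hX : #X = t ∧ P X) : A.value (J X) = A.value X :=
    (A.stable (h_print X hX) (h_sub X hX)).2
  rw [mul_comm, ← card_univ (α := V), ← card_powersetCard]
  refine card_le_mul_card_image_of_maps_to (f := J) (fun X hX => ?_) _ fun Y _ => ?_
  · exact mem_powersetCard.2 ⟨subset_univ _, h_card X (by simpa using hX)⟩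
  obtain h_empty | ⟨X₀, hX₀⟩ := ({X | (#X = t ∧ P X) ∧ J X = Y} : Finset _).eq_empty_or_nonempty
  · simp [filter_filter, h_empty]
  replace hX₀ : (#X₀ = t ∧ P X₀) ∧ J X₀ = Y := by simpa using hX₀
  obtain ⟨hX₀, rfl⟩ := hX₀
  refine le_trans ?_ (Nat.choose_le_choose _ (hA X₀ hX₀.1 hX₀.2).2.2)
  rw [← h_value hX₀, ← card_powersetCard, filter_filter]
  refine card_le_card_of_injOn (· \ J X₀) (fun X hX => ?_) fun X hX X' hX' h_eq => ?_
  · obtain ⟨hX, h_eq⟩ : (#X = t ∧ P X) ∧ J X = J X₀ := by simpa using hX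
    have h_sub_value : X ⊆ A.value (J X₀) := h_eq ▸ h_value hX ▸ (hA X hX.1 hX.2).2.1
    refine mem_powersetCard.2 ⟨sdiff_subset.trans h_sub_value, ?_⟩
    rw [← h_eq, card_sdiff_of_subset (h_sub X hX), hX.1, h_card X hX]
  · have h_union {X : Finset V} (hX : X ∈ ({X | (#X = t ∧ P X) ∧ J X = J X₀} : Finset _)) :
        X \ J X₀ ∪ J X₀ = X := by
      obtain ⟨hX, h_eq⟩ : (#X = t ∧ P X) ∧ J X = J X₀ := by simpa using hX
      exact sdiff_union_of_subset (h_eq ▸ h_sub X hX)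
    rw [← h_union hX, ← h_union hX', show X \ J X₀ = X' \ J X₀ from h_eq]

theorem card_isIndep_le_choose (j : ℕ) {c K β : ℝ} (hc : 0 < c) (hK : 0 < K) (hβ : 0 < β)
    (hβ1 : β ≤ 1) :
    ∃ C : ℕ, ∀ (V : Type*) [Fintype V] [Nonempty V] (H : Finset (Fin (j + 1) → V)) (s : ℕ) (p : ℝ),
      0 < p → Fintype.card V ≤ p * s → 8 ≤ β * Fintype.card V →
      (∀ A : Finset V, β ^ 2 / 64 * Fintype.card V ≤ #A →
        c * p ^ j * Fintype.card V ≤ #(edgesIn H A)) →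
      (CodegreeLE H fun m => K * p ^ (j + 1 - m)) →
      ∀ t, C * s < t →
        #{X : Finset V | #X = t ∧ IsIndep H X} ≤ ⌊β * Fintype.card V⌋₊.choose t := by
  obtain ⟨C, hC⟩ := exists_container_scheme j hc hK (show 0 ≤ β ^ 2 / 64 by positivity)
  refine ⟨2 * C, fun V _ _ H s p hp hps hn h_super h_codeg t ht => ?_⟩
  obtain ⟨A, hA⟩ := hC V H s p hp hps h_super h_codeg
  have hA' (I : Finset V) (hI : #I = t) (h_indep : IsIndep H I) :
      #(A.print I) ≤ C * s ∧ I ⊆ A.value I ∧ #(A.value I) ≤ ⌊β ^ 2 / 64 * Fintype.card V⌋₊ := by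
    obtain ⟨h_print, h_sub, h_card⟩ := hA I (card_pos.1 (by lia)) h_indep
    exact ⟨h_print, h_sub, Nat.le_floor h_card⟩
  rcases le_or_gt t ⌊β ^ 2 / 64 * Fintype.card V⌋₊ with h_le | h_gt
  · exact (A.card_filter_le _ (by lia) hA').trans
      (choose_mul_choose_le_choose_floor hβ1 hn (by lia) h_le)
  · refine (card_eq_zero.2 <| filter_eq_empty_iff.2 fun X _ hX => ?_).trans_le (Nat.zero_le _)
    obtain ⟨-, h_sub, h_card⟩ := hA' X hX.1 hX.2
    exact (hX.1.symm.trans_le ((card_le_card h_sub).trans h_card)).not_gt h_gt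

end Counting

section Walks

/-- `E` has density at least `η` between any two subsets of `Q` and `R` that contain at least a
proportion `η` of their vertices. -/
def LowerRegular {V W : Type*} (η : ℝ) (E : V → W → Prop) (Q : Finset V) (R : Finset W) : Prop :=
  ∀ X ⊆ Q, ∀ Y ⊆ R, η * #Q ≤ #X → η * #R ≤ #Y → η * (#X * #Y) ≤ #(Rel.interedges E X Y)

lemma card_interedges_eq_sum {V W : Type*} (E : V → W → Prop) (X : Finset V) (Y : Finset W) :
    #(Rel.interedges E X Y) = ∑ w ∈ Y, #{x ∈ X | E x w} := by
  simp only [Rel.interedges, card_filter, sum_product_right]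

namespace LowerRegular

variable {V W V' W' : Type*} {η : ℝ} {E : V → W → Prop} {Q : Finset V} {R : Finset W}

lemma mono {E' : V → W → Prop} (h : LowerRegular η E Q R) (hE : ∀ u w, E u w → E' u w) :
    LowerRegular η E' Q R := fun X hX Y hY hXc hYc =>
  (h X hX Y hY hXc hYc).trans <| by
    exact_mod_cast card_le_card (monotone_filter_right _ fun e (_ : e ∈ X ×ˢ Y) => hE e.1 e.2)

lemma swap (h : LowerRegular η E Q R) : LowerRegular η (fun w u => E u w) R Q :=
  fun Y hY X hX hYc hXc => by
    have h_card : #(Rel.interedges (fun w u => E u w) Y X) = #(Rel.interedges E X Y) :=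
      card_equiv (Equiv.prodComm _ _) fun e => by simp [Rel.mem_interedges_iff, and_left_comm]
    rw [h_card, mul_comm (#Y : ℝ)]
    exact h X hX Y hY hXc hYc

lemma of_map {E : V' → W' → Prop} {f : V ↪ V'} {g : W ↪ W'}
    (h : LowerRegular η E (Q.map f) (R.map g)) : LowerRegular η (fun u w => E (f u) (g w)) Q R := by
  intro X hX Y hY hXc hYc
  have h_edges : #(Rel.interedges E (X.map f) (Y.map g)) ≤
      #(Rel.interedges (fun u w => E (f u) (g w)) X Y) := by
    rw [← card_map (f.prodMap g)]
    refine card_le_card fun e he => ?_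
    simp only [Rel.mem_interedges_iff, Finset.mem_map] at he
    obtain ⟨⟨u, hu, hu_eq⟩, ⟨w, hw, hw_eq⟩, he⟩ := he
    refine Finset.mem_map.2 ⟨(u, w), Rel.mem_interedges_iff.2 ⟨hu, hw, ?_⟩, Prod.ext hu_eq hw_eq⟩
    simpa only [hu_eq, hw_eq] using he
  have h_large := h (X.map f) (map_subset_map.2 hX) (Y.map g) (map_subset_map.2 hY)
    (by simpa only [card_map] using hXc) (by simpa only [card_map] using hYc)
  simp only [card_map] at h_large
  exact h_large.trans (by exact_mod_cast h_edges)

lemma card_atypical_lt (h : LowerRegular η E Q R) (hη : 0 < η) (hR : R.Nonempty) {X : Finset V}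
    (hX : X ⊆ Q) (hXc : η * #Q ≤ #X) : (#{w ∈ R | #{x ∈ X | E x w} < η * #X} : ℝ) < η * #R := by
  set B := {w ∈ R | #{x ∈ X | E x w} < η * #X}
  by_contra! h_large
  have h_ne : B.Nonempty := by
    have hR_pos : (0 : ℝ) < #R := by exact_mod_cast hR.card_pos
    exact card_pos.1 (by exact_mod_cast (mul_pos hη hR_pos).trans_le h_large)
  refine (h X hX B (filter_subset _ _) hXc h_large).not_gt ?_
  calc (#(Rel.interedges E X B) : ℝ) = ∑ w ∈ B, (#{x ∈ X | E x w} : ℝ) := by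
        rw [card_interedges_eq_sum, Nat.cast_sum]
    _ < ∑ _w ∈ B, η * #X := sum_lt_sum_of_nonempty h_ne fun w hw => (mem_filter.1 hw).2
    _ = η * (#X * #B) := by rw [sum_const, nsmul_eq_mul]; ring

lemma le_card_typical (h : LowerRegular η E Q R) (hη : 0 < η) (hR : R.Nonempty) {X : Finset V}
    (hX : X ⊆ Q) (hXc : η * #Q ≤ #X) :
    (1 - η) * #R ≤ #{w ∈ R | η * #X ≤ #{x ∈ X | E x w}} := by
  have h_split : (#{w ∈ R | η * #X ≤ #{x ∈ X | E x w}} : ℝ) +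
      #{w ∈ R | #{x ∈ X | E x w} < η * #X} = #R := by
    simp only [← not_le]
    exact_mod_cast card_filter_add_card_filter_not (s := R) fun w => η * #X ≤ #{x ∈ X | E x w}
  linarith [h.card_atypical_lt hη hR hX hXc]

lemma exists_typical {U : Type*} {P : Finset U} {F : U → V → Prop} (hF : LowerRegular η F P Q)
    (hE : LowerRegular η E Q R) (hη : 0 < η) (hη' : η ≤ 1 / 2) (hQ : Q.Nonempty) :
    ∃ v ∈ Q, η * #P ≤ #{u ∈ P | F u v} ∧ η * #R ≤ #{w ∈ R | E v w} := by
  have h_self (a : ℕ) : η * a ≤ a :=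
    mul_le_of_le_one_left (Nat.cast_nonneg _) (by linarith)
  have h_in := hF.card_atypical_lt hη hQ subset_rfl (h_self #P)
  have h_out := hE.swap.card_atypical_lt hη hQ subset_rfl (h_self #R)
  have h_union :
      #({v ∈ Q | #{u ∈ P | F u v} < η * #P} ∪ {v ∈ Q | #{w ∈ R | E v w} < η * #R}) < #Q := by
    refine (card_union_le _ _).trans_lt ?_
    rify
    linarith [mul_le_mul_of_nonneg_right hη' (Nat.cast_nonneg (α := ℝ) #Q)]
  obtain ⟨v, hv, hv_typical⟩ := exists_mem_notMem_of_card_lt_card h_union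
  simp only [mem_union, mem_filter, hv, true_and, not_or, not_lt] at hv_typical
  exact ⟨v, hv, hv_typical⟩

end LowerRegular

variable {V : Type*} [Fintype V]

/-- The number of walks from `u` to `v` whose `i`-th step is along the relation `E i`. -/
noncomputable def walkCount : ∀ {l : ℕ}, (Fin l → V → V → Prop) → V → V → ℕ
  | 0, _, u, v => if u = v then 1 else 0
  | _ + 1, E, u, v => ∑ w with E 0 u w, walkCount (Fin.tail E) w v

lemma sum_walkCount_succ {l : ℕ} (E : Fin (l + 1) → V → V → Prop) (X : Finset V) (v : V) :
    ∑ x ∈ X, walkCount E x v = ∑ w, #{x ∈ X | E 0 x w} * walkCount (Fin.tail E) w v := by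
  simp only [walkCount, sum_filter]
  rw [sum_comm]
  simp only [← sum_filter, sum_const, smul_eq_mul]

lemma card_interedges_le_sum_walkCount (E : Fin 2 → V → V → Prop) (X R : Finset V) (v : V) :
    #(Rel.interedges (E 0) X {y ∈ R | E 1 y v}) ≤ ∑ x ∈ X, walkCount E x v := by
  rw [card_interedges_eq_sum, sum_walkCount_succ]
  have h_last (y : V) : walkCount (Fin.tail E) y v = if E 1 y v then 1 else 0 := by
    simp only [walkCount, sum_ite_eq', mem_filter_univ]
    rfl
  simp only [h_last, mul_ite, mul_one, mul_zero, ← sum_filter]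
  exact sum_le_sum_of_subset (monotone_filter_left _ (subset_univ R))

lemma mul_sum_walkCount_le {l : ℕ} (E : Fin (l + 1) → V → V → Prop) {X Y : Finset V} {a : ℝ}
    (hY : ∀ y ∈ Y, a ≤ #{x ∈ X | E 0 x y}) (v : V) :
    a * ↑(∑ y ∈ Y, walkCount (Fin.tail E) y v) ≤ ↑(∑ x ∈ X, walkCount E x v) := by
  rw [sum_walkCount_succ]
  push_cast
  rw [mul_sum]
  refine (sum_le_sum fun y hy => ?_).trans
    (sum_le_sum_of_subset_of_nonneg (subset_univ Y) fun _ _ _ => by positivity)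
  exact mul_le_mul_of_nonneg_right (hY y hy) (Nat.cast_nonneg _)

lemma le_sum_walkCount {η m : ℝ} (hη : 0 < η) (hη' : η ≤ 1 / 2) (hm : 0 < m) {l : ℕ}
    {E : Fin (l + 2) → V → V → Prop} {Q : Fin (l + 2) → Finset V} (hQ : ∀ i, m ≤ #(Q i))
    (hE : ∀ i : Fin (l + 1), LowerRegular η (E i.castSucc) (Q i.castSucc) (Q i.succ))
    {X : Finset V} (hX : X ⊆ Q 0) (hXc : η * #(Q 0) ≤ #X) {v : V}
    (hv : η * #(Q (Fin.last _)) ≤ #{y ∈ Q (Fin.last _) | E (Fin.last _) y v}) :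
    (η ^ 2 * m) ^ (l + 2) ≤ ↑(∑ x ∈ X, walkCount E x v) := by
  have hηX : η * m ≤ #X := le_trans (by gcongr; exact hQ 0) hXc
  induction l generalizing X with
  | zero =>
    set Y := {y ∈ Q 1 | E 1 y v}
    have hηY : η * m ≤ #Y := le_trans (by gcongr; exact hQ 1) hv
    calc (η ^ 2 * m) ^ 2 = η ^ 2 * ((η * m) * (η * m)) := by ring
      _ ≤ η * (#X * #Y) := by
          gcongr
          exact pow_le_of_le_one hη.le (by linarith) two_ne_zero
      _ ≤ #(Rel.interedges (E 0) X Y) := hE 0 X hX Y (filter_subset _ _) hXc hv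
      _ ≤ _ := by exact_mod_cast card_interedges_le_sum_walkCount E X (Q 1) v
  | succ l ih =>
    set Y := {y ∈ Q 1 | η * #X ≤ #{x ∈ X | E 0 x y}}
    have hQ_ne : (Q 1).Nonempty := card_pos.1 (by exact_mod_cast hm.trans_le (hQ 1))
    have hYc : η * #(Q 1) ≤ #Y :=
      calc η * #(Q 1) ≤ (1 - η) * #(Q 1) := by gcongr; linarith
        _ ≤ #Y := (hE 0).le_card_typical hη hQ_ne hX hXc
    have hηY : η * m ≤ #Y := le_trans (by gcongr; exact hQ 1) hYc
    have h_tail : (η ^ 2 * m) ^ (l + 2) ≤ ↑(∑ y ∈ Y, walkCount (Fin.tail E) y v) :=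
      ih (fun i => hQ i.succ) (fun i => hE i.succ) (filter_subset _ _) hYc hv hηY
    calc (η ^ 2 * m) ^ (l + 3) = η * (η * m) * (η ^ 2 * m) ^ (l + 2) := by ring
      _ ≤ η * #X * ↑(∑ y ∈ Y, walkCount (Fin.tail E) y v) := by gcongr
      _ ≤ _ := mul_sum_walkCount_le E (fun y hy => (mem_filter.1 hy).2) v

theorem exists_le_walkCount_self {η m : ℝ} (hη : 0 < η) (hη' : η ≤ 1 / 3) (hm : 0 < m) {l : ℕ}
    {E : Fin (l + 3) → V → V → Prop} {Q : Fin (l + 3) → Finset V} (hQ : ∀ i, m ≤ #(Q i))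
    (hE : ∀ i, LowerRegular η (E i) (Q i) (Q (i + 1))) :
    ∃ v, (η ^ 2 * m) ^ (l + 2) ≤ walkCount E v v := by
  have hQ_pos (i) : (0 : ℝ) < #(Q i) := hm.trans_le (hQ i)
  have hQ_ne (i) : (Q i).Nonempty := card_pos.1 (by exact_mod_cast hQ_pos i)
  have hE_last := hE (Fin.last _)
  rw [Fin.last_add_one] at hE_last
  obtain ⟨v, -, hv_last, hv_first⟩ := hE_last.exists_typical (hE 0) hη (by linarith) (hQ_ne 0)
  refine ⟨v, ?_⟩
  have h_steps (i : Fin (l + 1)) :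
      LowerRegular η (E i.castSucc.succ) (Q i.castSucc.succ) (Q i.succ.succ) := by
    rw [show i.succ.succ = i.castSucc.succ + 1 by rw [Fin.succ_castSucc, Fin.coeSucc_eq_succ]]
    exact hE _
  calc (η ^ 2 * m) ^ (l + 2) ≤ ↑(∑ w ∈ Q 1 with E 0 v w, walkCount (Fin.tail E) w v) :=
        le_sum_walkCount hη (by linarith) hm (fun i => hQ i.succ) h_steps (filter_subset _ _)
          hv_first hv_last
    _ ≤ walkCount E v v := by
        exact_mod_cast sum_le_sum_of_subset (monotone_filter_left _ (subset_univ (Q 1)))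

end Walks

section Regularity

variable {W : Type*} {G : SimpleGraph W}

lemma lowerRegular_of_isUniform {d : ℝ} (hd : 0 < d) (hd1 : d ≤ 1) {A B A' B' : Finset W}
    (hu : G.IsUniform (d ^ 2 / 2) A B) (h_dense : d ≤ G.edgeDensity A B)
    (hA : A' ⊆ A) (hAc : d * #A ≤ #A') (hB : B' ⊆ B) (hBc : d * #B ≤ #B') :
    LowerRegular (d / 2) G.Adj A' B' := by
  intro X hX Y hY hXc hYc
  have h_large {S T : ℕ} {a : ℝ} (hS : d * S ≤ T) (hT : d / 2 * T ≤ a) : S * (d ^ 2 / 2) ≤ a :=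
    calc S * (d ^ 2 / 2) = d / 2 * (d * S) := by ring
      _ ≤ a := le_trans (by gcongr) hT
  have h_close := hu (hX.trans hA) (hY.trans hB) (h_large hAc hXc) (h_large hBc hYc)
  have h_density : d / 2 ≤ G.edgeDensity X Y := by
    have h_sq : d ^ 2 ≤ d := pow_le_of_le_one hd.le hd1 two_ne_zero
    linarith [(abs_lt.1 h_close).1]
  rw [SimpleGraph.edgeDensity_def] at h_density
  push_cast at h_density
  exact mul_le_of_le_div₀ (Nat.cast_nonneg _) (by positivity) h_density

variable [Fintype W] {P : Finpartition (univ : Finset W)}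

/-- The edges of `G` that do not run between an `ε`-uniform pair of parts of density at least `d`,
where `part x` is the part of `x`. The cleaning step of the regularity method removes them. -/
noncomputable def irregularEdges (G : SimpleGraph W) (ε d : ℝ) (part : W → Finset W) :
    Finset (W × W) :=
  {e | G.Adj e.1 e.2 ∧ ¬ (G.IsUniform ε (part e.1) (part e.2) ∧
    d ≤ G.edgeDensity (part e.1) (part e.2))}

/-- The vertices whose colour class takes up less than a proportion `θ` of their part. -/
noncomputable def thinVertices {K : Type*} (κ : W → K) (θ : ℝ) (part : W → Finset W) : Finset W :=
  {x | #{y ∈ part x | κ y = κ x} < θ * #(part x)}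

lemma irregularEdges_subset {ε d : ℝ} : irregularEdges G ε d P.part ⊆
    ((P.nonUniforms G ε).biUnion fun (A, B) ↦ A ×ˢ B) ∪ P.parts.biUnion offDiag ∪
      (P.sparsePairs G d).biUnion fun (A, B) ↦ G.interedges A B := by
  rintro ⟨x, y⟩ hxy
  simp only [irregularEdges, mem_filter, mem_univ, true_and] at hxy
  obtain ⟨h_adj, h_irregular⟩ := hxy
  have h_mem (z : W) : z ∈ P.part z := P.mem_part (mem_univ z)
  have h_part (z : W) : P.part z ∈ P.parts := P.part_mem.2 (mem_univ z)
  simp only [mem_union, mem_biUnion, Prod.exists, P.mk_mem_nonUniforms, P.mk_mem_sparsePairs,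
    mem_product, mem_offDiag, SimpleGraph.mem_interedges_iff]
  by_cases h_eq : P.part x = P.part y
  · exact .inl (.inr ⟨P.part x, h_part x, h_mem x, h_eq ▸ h_mem y, h_adj.ne⟩)
  by_cases h_uniform : G.IsUniform ε (P.part x) (P.part y)
  · have h_sparse : G.edgeDensity (P.part x) (P.part y) < d :=
      not_le.1 fun h_dense => h_irregular ⟨h_uniform, h_dense⟩
    exact .inr ⟨_, _, ⟨h_part x, h_part y, h_eq, h_sparse⟩, h_mem x, h_mem y, h_adj⟩
  · exact .inl (.inl ⟨_, _, ⟨h_part x, h_part y, h_eq, h_uniform⟩, h_mem x, h_mem y⟩)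

lemma card_irregularEdges_le [Nonempty W] {ε d : ℝ} (hε : 0 < ε) (hd : 0 < d)
    (hP : P.IsEquipartition) (hu : P.IsUniform G ε) (h_parts : 4 / d ≤ #P.parts) :
    #(irregularEdges G ε d P.part) ≤ (4 * ε + 5 * d) * Fintype.card W ^ 2 := by
  have h_uniform := hP.sum_nonUniforms_lt univ_nonempty hε hu
  have h_diag := hP.card_biUnion_offDiag_le hd h_parts
  have h_sparse := hP.card_interedges_sparsePairs_le (G := G) hd.le
  have h_union := (card_le_card irregularEdges_subset).trans <| (card_union_le _ _).trans <|
    Nat.add_le_add_right (card_union_le ((P.nonUniforms G ε).biUnion fun (A, B) ↦ A ×ˢ B) _)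
      #((P.sparsePairs G d).biUnion fun (A, B) ↦ G.interedges A B)
  rify at h_union
  rw [card_univ] at h_uniform h_diag h_sparse
  linarith [show 0 ≤ d * (Fintype.card W : ℝ) ^ 2 by positivity]

lemma card_le_mul_card_of_mem_parts (hP : P.IsEquipartition) {A : Finset W} (hA : A ∈ P.parts) :
    Fintype.card W ≤ 2 * #P.parts * #A := by
  have h_pos : 0 < #P.parts := card_pos.2 ⟨A, hA⟩
  have h_le : #P.parts ≤ Fintype.card W := by simpa using P.card_parts_le_card
  have h_average : Fintype.card W / #P.parts ≤ #A := by simpa using hP.average_le_card_part hA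
  have h_one : 1 ≤ #A := (Nat.div_pos h_le h_pos).trans_le h_average
  calc Fintype.card W ≤ #P.parts * (Fintype.card W / #P.parts + 1) :=
        (Nat.lt_mul_div_succ _ h_pos).le
    _ ≤ #P.parts * (#A + #A) := by gcongr
    _ = 2 * #P.parts * #A := by ring

lemma card_thinVertices_le {K : Type*} [Fintype K] (P : Finpartition (univ : Finset W)) (κ : W → K)
    {θ : ℝ} (hθ : 0 ≤ θ) :
    #(thinVertices κ θ P.part) ≤ Fintype.card K * θ * Fintype.card W := by
  have h_cover : thinVertices κ θ P.part ⊆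
      (P.parts ×ˢ univ).biUnion fun (A, c) =>
        if #{y ∈ A | κ y = c} < θ * #A then {y ∈ A | κ y = c} else ∅ := by
    intro x hx
    have hx_mem : x ∈ P.part x := P.mem_part (mem_univ x)
    refine mem_biUnion.2 ⟨(P.part x, κ x), by simp [P.part_mem], ?_⟩
    simp only [thinVertices, mem_filter, mem_univ, true_and] at hx
    simp [hx, hx_mem]
  have h_class (A : Finset W) (c : K) :
      (#(if #{y ∈ A | κ y = c} < θ * #A then {y ∈ A | κ y = c} else ∅) : ℝ) ≤ θ * #A := by
    split_ifs with h
    · exact h.le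
    · simpa using by positivity
  calc (#(thinVertices κ θ P.part) : ℝ)
      ≤ ∑ A ∈ P.parts, ∑ _c : K, θ * #A := by
        rw [← sum_product']
        refine (Nat.cast_le.2 ((card_le_card h_cover).trans card_biUnion_le)).trans ?_
        rw [Nat.cast_sum]
        exact sum_le_sum fun e _ => h_class e.1 e.2
    _ = Fintype.card K * θ * Fintype.card W := by
        simp only [sum_const, card_univ, nsmul_eq_mul, ← mul_sum, ← Nat.cast_sum, P.sum_card_parts]
        ring

theorem exists_regular_parts (K : Type*) [Fintype K] {ε d θ : ℝ} (hε : 0 < ε)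
    (hd : 0 < d) (hθ : 0 ≤ θ) :
    ∃ M n₀ : ℕ, 0 < M ∧ ∀ (W : Type*) [Fintype W] [Nonempty W] (G : SimpleGraph W) (κ : W → K),
      n₀ ≤ Fintype.card W → ∃ part : W → Finset W,
        (∀ x, Fintype.card W ≤ M * #(part x)) ∧
        #(irregularEdges G ε d part) ≤ (4 * ε + 5 * d) * Fintype.card W ^ 2 ∧
        #(thinVertices κ θ part) ≤ Fintype.card K * θ * Fintype.card W := by
  refine ⟨2 * SzemerediRegularity.bound ε ⌈4 / d⌉₊, ⌈4 / d⌉₊,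
    Nat.mul_pos two_pos (SzemerediRegularity.bound_pos _ _), fun W _ _ G κ hn => ?_⟩
  obtain ⟨P, hP, h_ge, h_le, hu⟩ := szemeredi_regularity G hε hn
  refine ⟨P.part, fun x => ?_, card_irregularEdges_le hε hd hP hu (Nat.ceil_le.1 h_ge),
    card_thinVertices_le P κ hθ⟩
  refine (card_le_mul_card_of_mem_parts hP (P.part_mem.2 (mem_univ x))).trans ?_
  gcongr

end Regularity

section CyclicRemoval

variable {V : Type*} {l : ℕ}

/-- The cyclically layered graph with layers `{i} × V`, `i : Fin (l + 3)`, in which the relation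
`E i` joins layer `i` to layer `i + 1`. -/
def layeredGraph (E : Fin (l + 3) → V → V → Prop) : SimpleGraph (Fin (l + 3) × V) :=
  SimpleGraph.fromRel fun x y => y.1 = x.1 + 1 ∧ E x.1 x.2 y.2

lemma layeredGraph_adj {E : Fin (l + 3) → V → V → Prop} {i : Fin (l + 3)} {u v : V} :
    (layeredGraph E).Adj (i, u) (i + 1, v) ↔ E i u v := by
  have h_ne : i + 1 ≠ i := by simp
  have h_ne' : i ≠ i + 1 + 1 := by
    rw [add_assoc, ne_comm, Ne, add_eq_left]
    simp [Fin.ext_iff, Fin.val_add, Nat.mod_eq_of_lt (show 2 < l + 3 by lia)]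
  simp [layeredGraph, h_ne', h_ne.symm]

lemma map_sectR_filter [Fintype V] (j : Fin (l + 3)) (S : Finset (Fin (l + 3) × V)) :
    ({v | (j, v) ∈ S} : Finset V).map (.sectR j V) = {y ∈ S | y.1 = j} := by
  ext ⟨a, v⟩
  simp only [Finset.mem_map, mem_filter, mem_univ, true_and, Function.Embedding.sectR_apply,
    Prod.mk.injEq]
  grind

lemma le_card_layer [Fintype V] {d : ℝ} (hd : 0 < d) {M : ℕ} (hM : 0 < M) {i : Fin (l + 3)}
    {A : Finset (Fin (l + 3) × V)} (h_size : Fintype.card (Fin (l + 3) × V) ≤ M * #A)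
    (hA : d * #A ≤ #{y ∈ A | y.1 = i}) : d / M * Fintype.card V ≤ #{u | (i, u) ∈ A} := by
  have h_size' : Fintype.card V ≤ M * #A :=
    (Fintype.card_le_of_injective _ (Prod.mk_right_injective i)).trans h_size
  calc d / M * Fintype.card V ≤ d / M * (M * #A) := by gcongr; exact_mod_cast h_size'
    _ = d * #A := by field_simp
    _ ≤ #{y ∈ A | y.1 = i} := hA
    _ = #{u | (i, u) ∈ A} := by rw [← map_sectR_filter, card_map]

lemma lowerRegular_layer [Fintype V] {E : Fin (l + 3) → V → V → Prop} {i : Fin (l + 3)} {d : ℝ}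
    (hd : 0 < d) (hd1 : d ≤ 1) {A B : Finset (Fin (l + 3) × V)}
    (hu : (layeredGraph E).IsUniform (d ^ 2 / 2) A B)
    (h_dense : d ≤ (layeredGraph E).edgeDensity A B) (hA : d * #A ≤ #{y ∈ A | y.1 = i})
    (hB : d * #B ≤ #{y ∈ B | y.1 = i + 1}) :
    LowerRegular (d / 2) (E i) {u | (i, u) ∈ A} {v | (i + 1, v) ∈ B} := by
  refine LowerRegular.mono (LowerRegular.of_map (f := .sectR i V) (g := .sectR (i + 1) V)
    (E := (layeredGraph E).Adj) ?_) fun u v => layeredGraph_adj.1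
  rw [map_sectR_filter, map_sectR_filter]
  exact lowerRegular_of_isUniform hd hd1 hu h_dense (filter_subset _ _) hA (filter_subset _ _) hB

lemma exists_forall_notMem_of_card_lt {ι K β : Type*} [Fintype ι] [Fintype K] {f : K → ι → β}
    (hf : ∀ i, Function.Injective (f i)) {B : Finset β}
    (h : Fintype.card K * #B < Fintype.card ι) : ∃ t, ∀ i, f i t ∉ B := by
  by_contra! h_bad
  refine h.not_ge ?_
  calc Fintype.card ι = #(univ.biUnion fun i => {t | f i t ∈ B}) := by
        rw [← card_univ]
        congr
        ext t
        simpa using h_bad t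
    _ ≤ Fintype.card K * #B :=
        card_biUnion_le_card_mul _ _ _ fun i _ =>
          card_le_card_of_injOn (f i) (fun t ht => (mem_filter.1 ht).2) (hf i).injOn

lemma exists_regular_member [Fintype V] {E : Fin (l + 3) → V → V → Prop} {ι : Type*} [Fintype ι]
    {x : ι → Fin (l + 3) → V} (hE : ∀ t i, E i (x t i) (x t (i + 1)))
    (hx : ∀ i, Function.Injective fun t => (x t i, x t (i + 1)))
    {part : Fin (l + 3) × V → Finset (Fin (l + 3) × V)} {ε d θ a b : ℝ}
    (h_irregular : #(irregularEdges (layeredGraph E) ε d part) ≤ a)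
    (h_thin : #(thinVertices Prod.fst θ part) ≤ b)
    (h_many : (l + 3) * (a + b * ((l + 3) * Fintype.card V)) < Fintype.card ι) :
    ∃ t, ∀ i, ((layeredGraph E).IsUniform ε (part (i, x t i)) (part (i + 1, x t (i + 1))) ∧
      d ≤ (layeredGraph E).edgeDensity (part (i, x t i)) (part (i + 1, x t (i + 1)))) ∧
      θ * #(part (i, x t i)) ≤ #{y ∈ part (i, x t i) | y.1 = i} := by
  set I := irregularEdges (layeredGraph E) ε d part
  set T := thinVertices Prod.fst θ part
  have h_card : (#(I ∪ T ×ˢ univ) : ℝ) ≤ a + b * ((l + 3) * Fintype.card V) :=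
    calc (#(I ∪ T ×ˢ univ) : ℝ) ≤ #I + #T * ((l + 3) * Fintype.card V) := by
          exact_mod_cast (card_union_le _ _).trans_eq (by simp [card_product])
      _ ≤ _ := by gcongr
  obtain ⟨t, ht⟩ := exists_forall_notMem_of_card_lt
    (f := fun i t => ((i, x t i), (i + 1, x t (i + 1)))) (B := I ∪ T ×ˢ univ)
    (fun i t t' h => hx i (by simpa using h)) (by
      rify
      simpa using (mul_le_mul_of_nonneg_left h_card (by positivity)).trans_lt h_many)
  refine ⟨t, fun i => ?_⟩
  simpa [I, T, irregularEdges, thinVertices, layeredGraph_adj, hE] using ht i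

theorem exists_cyclic_removal (l : ℕ) {ε : ℝ} (hε : 0 < ε) :
    ∃ (c : ℝ) (n₀ : ℕ), 0 < c ∧ ∀ (V : Type*) [Fintype V] [Nonempty V]
      (E : Fin (l + 3) → V → V → Prop) (ι : Type*) [Fintype ι] (x : ι → Fin (l + 3) → V),
      (∀ t i, E i (x t i) (x t (i + 1))) →
      (∀ i, Function.Injective fun t => (x t i, x t (i + 1))) →
      ε * Fintype.card V ^ 2 ≤ Fintype.card ι → n₀ ≤ Fintype.card V →
      ∃ v, c * Fintype.card V ^ (l + 2) ≤ walkCount E v v := by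
  set k : ℝ := l + 3 with hk
  have hk3 : 3 ≤ k := by simp [hk]
  obtain ⟨d, hd, hd_le, hdε⟩ : ∃ d : ℝ, 0 < d ∧ d ≤ 1 / 2 ∧ 3 * k ^ 4 * d < ε := by
    refine ⟨min (1 / 2) (ε / (6 * k ^ 4)), by positivity, min_le_left _ _, ?_⟩
    calc 3 * k ^ 4 * min (1 / 2) (ε / (6 * k ^ 4)) ≤ 3 * k ^ 4 * (ε / (6 * k ^ 4)) := by
          gcongr
          exact min_le_right _ _
      _ < ε := by field_simp; norm_num
  obtain ⟨M, n₀, hM, h_regular⟩ := exists_regular_parts (Fin (l + 3)) (ε := d ^ 2 / 2) (θ := d)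
    (by positivity) hd hd.le
  refine ⟨((d / 2) ^ 2 * (d / M)) ^ (l + 2), n₀, by positivity,
    fun V _ _ E ι _ x hE hx h_many hn => ?_⟩
  set n : ℝ := (Fintype.card V : ℝ) with hn_def
  have hn_pos : 0 < n := by positivity
  have h_card : (Fintype.card (Fin (l + 3) × V) : ℝ) = k * n := by simp [hk, hn_def]
  obtain ⟨part, h_size, h_irregular, h_thin⟩ := h_regular (Fin (l + 3) × V) (layeredGraph E)
    Prod.fst (hn.trans (Fintype.card_le_of_injective _
      (Prod.mk_right_injective (0 : Fin (l + 3)))))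
  rw [h_card] at h_irregular h_thin
  obtain ⟨t, ht⟩ := exists_regular_member hE hx h_irregular h_thin <|
    calc _ = k ^ 3 * (2 * d + 5 + k) * d * n ^ 2 := by
          simp only [Fintype.card_fin, Nat.cast_add, Nat.cast_ofNat, ← hk, ← hn_def]
          ring
      _ ≤ k ^ 3 * (3 * k) * d * n ^ 2 := by gcongr; linarith
      _ = 3 * k ^ 4 * d * n ^ 2 := by ring
      _ < ε * n ^ 2 := by gcongr
      _ ≤ _ := h_many
  obtain ⟨v, hv⟩ := exists_le_walkCount_self (η := d / 2) (by linarith) (by linarith)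
    (by positivity) (fun i => le_card_layer hd hM (h_size _) (ht i).2) fun i =>
      lowerRegular_layer hd (by linarith) (ht i).1.1 (ht i).1.2 (ht i).2 (ht (i + 1)).2
  exact ⟨v, by simpa only [← mul_assoc, mul_pow] using hv⟩

end CyclicRemoval

section CoordDetermined

variable {V : Type*} {k : ℕ}

/-- Any `k - 1` coordinates of a tuple in `S` determine the remaining one. Both degree conditions
on the set of solutions of a product equation come from this property. -/
def CoordDetermined (S : Finset (Fin k → V)) : Prop :=
  ∀ x ∈ S, ∀ y ∈ S, ∀ i, (∀ j, j ≠ i → x j = y j) → x = y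

lemma CoordDetermined.mono {S S' : Finset (Fin k → V)} (hS : CoordDetermined S) (h : S' ⊆ S) :
    CoordDetermined S' :=
  fun x hx y hy => hS x (h hx) y (h hy)

variable [Fintype V]

lemma card_le_pow_of_forall_eq {F : Finset (Fin k → V)} {D : Finset (Fin k)}
    (h : ∀ x ∈ F, ∀ y ∈ F, (∀ j ∈ D, x j = y j) → x = y) : #F ≤ Fintype.card V ^ #D := by
  have h_card : #(univ : Finset (D → V)) = Fintype.card V ^ #D := by simp
  rw [← h_card]
  exact card_le_card_of_injOn (fun x j => x j.1) (fun _ _ => mem_coe.2 (mem_univ _))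
    fun x hx y hy hxy => h x hx y hy fun j hj => congrFun hxy ⟨j, hj⟩

namespace CoordDetermined

variable {S : Finset (Fin k → V)}

lemma codegree_le (hS : CoordDetermined S) {T : Finset (Fin k)} (hT : T ≠ univ) (z : Fin k → V) :
    codegree S T z ≤ Fintype.card V ^ (k - (#T + 1)) := by
  obtain ⟨i, hi⟩ : ∃ i, i ∉ T := by simpa [eq_univ_iff_forall] using hT
  have h_compl : #(insert i T)ᶜ = k - (#T + 1) := by
    rw [card_compl, Fintype.card_fin, card_insert_of_notMem hi]
  rw [← h_compl]
  refine card_le_pow_of_forall_eq fun x hx y hy hxy => ?_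
  obtain ⟨hxS, hxz⟩ := mem_filter.1 hx
  obtain ⟨hyS, hyz⟩ := mem_filter.1 hy
  refine hS x hxS y hyS i fun j hj => ?_
  by_cases hjT : j ∈ T
  · rw [hxz j hjT, hyz j hjT]
  · exact hxy j (by simp [hj, hjT])

lemma card_filter_eq_le (hS : CoordDetermined S) (hk : 3 ≤ k) {a b : Fin k} (hab : a ≠ b) :
    #{x ∈ S | x a = x b} ≤ Fintype.card V ^ (k - 2) := by
  obtain ⟨i, hi⟩ : ∃ i, i ∉ ({a, b} : Finset (Fin k)) := by
    by_contra! h_all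
    have h_le := card_le_two (a := a) (b := b)
    rw [eq_univ_iff_forall.2 h_all, card_univ, Fintype.card_fin] at h_le
    lia
  simp only [mem_insert, mem_singleton, not_or] at hi
  have h_compl : #({i, b}ᶜ : Finset (Fin k)) = k - 2 := by
    rw [card_compl, Fintype.card_fin, card_pair hi.2]
  rw [← h_compl]
  refine card_le_pow_of_forall_eq fun x hx y hy hxy => ?_
  obtain ⟨hxS, hx_eq⟩ := mem_filter.1 hx
  obtain ⟨hyS, hy_eq⟩ := mem_filter.1 hy
  refine hS x hxS y hyS i fun j hj => ?_
  by_cases hjb : j = b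
  · rw [hjb, ← hx_eq, ← hy_eq]
    exact hxy a (by simp [Ne.symm hi.1, hab])
  · exact hxy j (by simp [hj, hjb])

lemma card_not_injective_le (hS : CoordDetermined S) (hk : 3 ≤ k) :
    #{x ∈ S | ¬ Function.Injective x} ≤ k ^ 2 * Fintype.card V ^ (k - 2) := by
  have h_cover : {x ∈ S | ¬ Function.Injective x} ⊆
      (univ.offDiag : Finset (Fin k × Fin k)).biUnion fun e => {x ∈ S | x e.1 = x e.2} := by
    intro x hx
    obtain ⟨hxS, hx_inj⟩ := mem_filter.1 hx
    obtain ⟨a, b, h_eq, hab⟩ := Function.not_injective_iff.1 hx_inj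
    exact mem_biUnion.2 ⟨(a, b), by simpa using hab, mem_filter.2 ⟨hxS, h_eq⟩⟩
  calc #{x ∈ S | ¬ Function.Injective x}
      ≤ #(univ.offDiag : Finset (Fin k × Fin k)) * Fintype.card V ^ (k - 2) :=
        (card_le_card h_cover).trans <| card_biUnion_le_card_mul _ _ _ fun e he =>
          hS.card_filter_eq_le hk (mem_offDiag.1 he).2.2
    _ ≤ k ^ 2 * Fintype.card V ^ (k - 2) := by
        gcongr
        simp [offDiag_card, sq]

end CoordDetermined

end CoordDetermined

section PowProd

variable {G : Type*} [Group G]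

lemma eq_of_prod_map_eq {ι : Type*} {f g : ι → G} {i : ι} (h : ∀ j, j ≠ i → f j = g j) {L : List ι}
    (hL : L.Nodup) (hi : i ∈ L) (h_prod : (L.map f).prod = (L.map g).prod) : f i = g i := by
  obtain ⟨L₁, L₂, rfl⟩ := List.append_of_mem hi
  have h_eq (L' : List ι) (hL' : i ∉ L') : L'.map f = L'.map g :=
    List.map_congr_left fun j hj => h j fun e => hL' (e ▸ hj)
  rw [List.nodup_middle, List.nodup_cons, List.mem_append, not_or] at hL
  simpa [h_eq L₁ hL.1.1, h_eq L₂ hL.1.2] using h_prod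

/-- `v` is reached from `u` by multiplying by the `m`-th power of an element of `A`. Closed walks
with steps `PowStep A (r i)` encode solutions with entries in `A`. -/
def PowStep (A : Finset G) (m : ℕ) (u v : G) : Prop :=
  ∃ a ∈ A, u * a ^ m = v

/-- The walk `u, u * a ^ r₀, u * a ^ (r₀ + r₁), …`. -/
def powWalk {k : ℕ} (r : Fin k → ℕ) (u a : G) (i : Fin k) : G :=
  u * a ^ Fin.partialSum r i.castSucc

lemma powWalk_add_one {k : ℕ} {r : Fin (k + 1) → ℕ} (hr : Monoid.exponent G ∣ ∑ j, r j) (u a : G)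
    (i : Fin (k + 1)) : powWalk r u a (i + 1) = powWalk r u a i * a ^ r i := by
  rw [powWalk, powWalk, mul_assoc, ← pow_add, ← Fin.partialSum_succ]
  cases i using Fin.lastCases with
  | cast i => rw [Fin.coeSucc_eq_succ, Fin.succ_castSucc]
  | last =>
    have h_sum : Fin.partialSum r (Fin.last k).succ = ∑ j, r j := by
      simp [Fin.partialSum, List.take_of_length_le, List.sum_ofFn, Fin.sum_univ_succ]
    rw [h_sum, Monoid.exponent_dvd_iff_forall_pow_eq_one.1 hr, Fin.last_add_one,
      Fin.castSucc_zero, Fin.partialSum_zero, pow_zero]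

variable [Fintype G]

/-- The tuples `x` with `x₀ ^ r₀ ⋯ x_{k-1} ^ r_{k-1} = 1`. -/
noncomputable def powProdSolutions (G : Type*) [Group G] [Fintype G] {k : ℕ} (r : Fin k → ℕ) :
    Finset (Fin k → G) :=
  {x | ((List.finRange k).map fun j => x j ^ r j).prod = 1}

lemma pow_injective_of_coprime {m : ℕ} (hm : m.Coprime (Fintype.card G)) :
    Function.Injective fun a : G => a ^ m :=
  (Nat.Coprime.pow_left_bijective (by rwa [Nat.card_eq_fintype_card, Nat.coprime_comm])).1

lemma coordDetermined_powProdSolutions {k : ℕ} {r : Fin k → ℕ}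
    (hr : ∀ j, (r j).Coprime (Fintype.card G)) : CoordDetermined (powProdSolutions G r) := by
  intro x hx y hy i h
  have h_pow : x i ^ r i = y i ^ r i :=
    eq_of_prod_map_eq (f := fun j => x j ^ r j) (g := fun j => y j ^ r j)
      (fun j hj => by simp only [h j hj]) (List.nodup_finRange k) (List.mem_finRange i)
      ((mem_filter.1 hx).2.trans (mem_filter.1 hy).2.symm)
  funext j
  by_cases hj : j = i
  · rw [hj, pow_injective_of_coprime (hr i) h_pow]
  · exact h j hj

lemma powWalk_step_injective {k : ℕ} {r : Fin (k + 1) → ℕ} (hr : Monoid.exponent G ∣ ∑ j, r j)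
    (hcop : ∀ j, (r j).Coprime (Fintype.card G)) (i : Fin (k + 1)) :
    Function.Injective fun z : G × G => (powWalk r z.1 z.2 i, powWalk r z.1 z.2 (i + 1)) := by
  rintro ⟨u, a⟩ ⟨u', a'⟩ h
  obtain ⟨h_vertex, h_next⟩ := Prod.mk.inj h
  rw [powWalk_add_one hr, powWalk_add_one hr, h_vertex, mul_right_inj] at h_next
  obtain rfl := pow_injective_of_coprime (hcop i) h_next
  exact congrArg (·, a) (mul_right_cancel h_vertex)

lemma walkCount_le_card_powProd {l : ℕ} (r : Fin l → ℕ) (A : Finset G) (u v : G) :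
    walkCount (fun i => PowStep A (r i)) u v ≤
      #{x : Fin l → G | (∀ i, x i ∈ A) ∧
        u * ((List.finRange l).map fun j => x j ^ r j).prod = v} := by
  induction l generalizing u with
  | zero => by_cases h : u = v <;> simp [walkCount, h]
  | succ l ih =>
    set S : Finset (Fin (l + 1) → G) := {x | (∀ i, x i ∈ A) ∧
      u * ((List.finRange (l + 1)).map fun j => x j ^ r j).prod = v} with hS
    calc walkCount (fun i => PowStep A (r i)) u v
        ≤ ∑ w with PowStep A (r 0) u w, #{x ∈ S | u * x 0 ^ r 0 = w} := by
          refine sum_le_sum fun w hw => ?_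
          refine (ih (Fin.tail r) w).trans ?_
          obtain ⟨a, ha, haw⟩ := (mem_filter.1 hw).2
          refine card_le_card_of_injOn (fun x => (Fin.cons a x : Fin (l + 1) → G)) (fun x hx => ?_)
            (Fin.cons_right_injective (α := fun _ => G) a).injOn
          simpa [hS, haw, ha, Fin.forall_fin_succ, List.finRange_succ, Function.comp_def, Fin.tail,
            ← mul_assoc] using (mem_filter.1 hx).2
      _ ≤ #S := (sum_card_fiberwise_eq_card_filter S _ fun x => u * x 0 ^ r 0).trans_le
          (card_filter_le _ _)

theorem exists_le_card_edgesIn_powProdSolutions (l : ℕ) {ε : ℝ} (hε : 0 < ε) :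
    ∃ (c : ℝ) (n₀ : ℕ), 0 < c ∧ ∀ (G : Type*) [Group G] [Fintype G] (r : Fin (l + 3) → ℕ),
      Monoid.exponent G ∣ ∑ j, r j → (∀ j, (r j).Coprime (Fintype.card G)) →
      n₀ ≤ Fintype.card G → ∀ A : Finset G, ε * Fintype.card G ≤ #A →
      c * Fintype.card G ^ (l + 2) ≤ #(edgesIn (powProdSolutions G r) A) := by
  obtain ⟨c, n₀, hc, h_removal⟩ := exists_cyclic_removal l hε
  refine ⟨c, n₀, hc, fun G _ _ r hr hcop hn A hA => ?_⟩
  have h_many : ε * Fintype.card G ^ 2 ≤ Fintype.card (G × A) := by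
    rw [Fintype.card_prod, Fintype.card_coe, Nat.cast_mul]
    nlinarith [Nat.cast_nonneg (α := ℝ) (Fintype.card G)]
  obtain ⟨v, hv⟩ := h_removal G (fun i => PowStep A (r i)) (G × A)
    (fun z => powWalk r z.1 z.2) (fun z i => ⟨z.2, z.2.2, (powWalk_add_one hr z.1 z.2.1 i).symm⟩)
    (fun i => (powWalk_step_injective hr hcop i).comp
      (Function.injective_id.prodMap Subtype.val_injective)) h_many hn
  refine hv.trans ?_
  exact_mod_cast (walkCount_le_card_powProd r A v v).trans
    (card_le_card fun x => by simp [edgesIn, powProdSolutions, and_comm])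

end PowProd

section SparseCounting

variable {V : Type*} [Fintype V]

lemma CoordDetermined.codegreeLE {j : ℕ} {S : Finset (Fin (j + 1) → V)} (hS : CoordDetermined S)
    {ρ : ℝ} (hρ : 1 ≤ ρ) (hρV : ρ ^ j = Fintype.card V) :
    CodegreeLE S fun m => (ρ ^ (j - 1)) ^ (j + 1 - m) := by
  intro T hT z
  by_cases hT_univ : T = univ
  · have h_one : codegree S univ z ≤ 1 := card_le_one.2 fun x hx y hy => by
      obtain ⟨-, hxz⟩ := mem_filter.1 hx
      obtain ⟨-, hyz⟩ := mem_filter.1 hy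
      funext i
      rw [hxz i (mem_univ i), hyz i (mem_univ i)]
    simpa [hT_univ] using h_one
  · have hT_pos := hT.card_pos
    have hT_lt : #T < j + 1 := by simpa using (card_lt_iff_ne_univ T).2 hT_univ
    calc (codegree S T z : ℝ) ≤ Fintype.card V ^ (j + 1 - (#T + 1)) := by
          exact_mod_cast hS.codegree_le hT_univ z
      _ = ρ ^ (j * (j + 1 - (#T + 1))) := by rw [← hρV, pow_mul]
      _ ≤ ρ ^ ((j - 1) * (j + 1 - #T)) := by
          refine pow_le_pow_right₀ hρ ?_
          obtain ⟨a, ha⟩ := Nat.exists_eq_add_of_lt hT_pos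
          obtain ⟨b, hb⟩ := Nat.exists_eq_add_of_le (Nat.lt_succ_iff.1 hT_lt)
          rw [show j + 1 - (#T + 1) = b by lia, show j - 1 = a + b by lia,
            show j + 1 - #T = b + 1 by lia, show j = a + b + 1 by lia]
          nlinarith
      _ = (ρ ^ (j - 1)) ^ (j + 1 - #T) := pow_mul _ _ _

lemma CoordDetermined.le_card_edgesIn_injective {l : ℕ} {S : Finset (Fin (l + 3) → V)}
    (hS : CoordDetermined S) {c : ℝ} (hn : 2 * (l + 3) ^ 2 ≤ c * Fintype.card V) {A : Finset V}
    (hA : c * Fintype.card V ^ (l + 2) ≤ #(edgesIn S A)) :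
    c / 2 * Fintype.card V ^ (l + 2) ≤ #(edgesIn {x ∈ S | Function.Injective x} A) := by
  have h_cover : edgesIn S A ⊆
      edgesIn {x ∈ S | Function.Injective x} A ∪ {x ∈ S | ¬ Function.Injective x} := by
    intro x
    simp only [edgesIn, mem_union, mem_filter]
    tauto
  have h_union : (#(edgesIn S A) : ℝ) ≤ #(edgesIn {x ∈ S | Function.Injective x} A) +
      (l + 3) ^ 2 * Fintype.card V ^ (l + 1) := by
    exact_mod_cast (card_le_card h_cover).trans <| (card_union_le _ _).trans <|
      Nat.add_le_add_left (hS.card_not_injective_le (by lia)) _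
  have h_few : (2 * (l + 3) ^ 2 : ℝ) * Fintype.card V ^ (l + 1) ≤ c * Fintype.card V ^ (l + 2) := by
    calc _ ≤ c * Fintype.card V * Fintype.card V ^ (l + 1) := by gcongr
      _ = c * Fintype.card V ^ (l + 2) := by ring
  linarith

theorem card_isIndep_le_choose_of_coordDetermined (l : ℕ) {c β : ℝ} (hc : 0 < c) (hβ : 0 < β)
    (hβ1 : β ≤ 1) :
    ∃ (C : ℝ) (n₀ : ℕ), 0 < C ∧ ∀ (V : Type*) [Fintype V] (S : Finset (Fin (l + 3) → V)),
      CoordDetermined S → n₀ ≤ Fintype.card V →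
      (∀ A : Finset V, β ^ 2 / 64 * Fintype.card V ≤ #A →
        c * Fintype.card V ^ (l + 2) ≤ #(edgesIn S A)) →
      ∀ t : ℕ, C * (Fintype.card V : ℝ) ^ (1 / (l + 2) : ℝ) ≤ t →
        #{X : Finset V | #X = t ∧ IsIndep {x ∈ S | Function.Injective x} X} ≤
          ⌊β * Fintype.card V⌋₊.choose t := by
  obtain ⟨C, hC⟩ := card_isIndep_le_choose (l + 2) (half_pos hc) one_pos hβ hβ1
  refine ⟨2 * C + 1, ⌈2 * (l + 3) ^ 2 / c⌉₊ + ⌈8 / β⌉₊, by positivity,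
    fun V _ S hS hn h_super t ht => ?_⟩
  have hn_β : 8 / β ≤ Fintype.card V :=
    (Nat.le_ceil _).trans (by exact_mod_cast le_of_add_le_right hn)
  have hn_c : 2 * (l + 3) ^ 2 / c ≤ Fintype.card V :=
    (Nat.le_ceil _).trans (by exact_mod_cast le_of_add_le_left hn)
  rw [div_le_iff₀' hβ] at hn_β
  rw [div_le_iff₀' hc] at hn_c
  have : Nonempty V := Fintype.card_pos_iff.1 (Nat.pos_of_ne_zero fun h => by norm_num [h] at hn_β)
  set ρ : ℝ := (Fintype.card V : ℝ) ^ (1 / (l + 2) : ℝ) with hρ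
  have hρ1 : 1 ≤ ρ := Real.one_le_rpow (by exact_mod_cast Fintype.card_pos) (by positivity)
  have hρV : ρ ^ (l + 2) = Fintype.card V := by
    have := Real.rpow_inv_natCast_pow (Nat.cast_nonneg (α := ℝ) (Fintype.card V))
      (n := l + 2) (by lia)
    simpa [hρ] using this
  have h_ceil : ρ ≤ ⌈ρ⌉₊ := Nat.le_ceil ρ
  refine hC V _ ⌈ρ⌉₊ (ρ ^ (l + 1)) (by positivity) ?_ hn_β (fun A hA => ?_) ?_ t ?_
  · calc (Fintype.card V : ℝ) = ρ ^ (l + 1) * ρ := by rw [← hρV, pow_succ]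
      _ ≤ ρ ^ (l + 1) * ⌈ρ⌉₊ := by gcongr
  · calc c / 2 * (ρ ^ (l + 1)) ^ (l + 2) * Fintype.card V
        = c / 2 * Fintype.card V ^ (l + 2) := by rw [← hρV]; ring
      _ ≤ _ := hS.le_card_edgesIn_injective hn_c (h_super A hA)
  · simpa using (hS.mono (filter_subset _ S)).codegreeLE hρ1 hρV
  · have h_ceil' : (⌈ρ⌉₊ : ℝ) ≤ 2 * ρ := by linarith [Nat.ceil_lt_add_one (zero_le_one.trans hρ1)]
    rify
    calc (C * ⌈ρ⌉₊ : ℝ) ≤ C * (2 * ρ) := by gcongr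
      _ < (2 * C + 1) * ρ := by linarith
      _ ≤ t := ht

lemma filter_card_eq_of_card_lt {t : ℕ} (ht : Fintype.card V < t) (P : Finset V → Prop) :
    ({X : Finset V | #X = t ∧ P X} : Finset (Finset V)) = ∅ :=
  filter_eq_empty_iff.2 fun X _ hX => ((card_le_univ X).trans_lt ht).ne hX.1

end SparseCounting

theorem stmt14_general.{u} {k : ℕ} (hk : 2 ≤ k) {β : ℝ} (hβ : 0 < β) :
    ∃ C : ℝ, 0 < C ∧ ∀ (G : Type u) [Group G] [Fintype G] (r : Fin k → ℕ),
      Monoid.exponent G ∣ ∑ j, r j → (∀ j, (r j).Coprime (Fintype.card G)) →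
      ∀ t : ℕ, C * (Fintype.card G : ℝ) ^ (1 / (k - 1) : ℝ) ≤ t →
        #{X : Finset G | #X = t ∧ IsIndep {x ∈ powProdSolutions G r | Function.Injective x} X} ≤
          ⌊β * Fintype.card G⌋₊.choose t := by
  obtain rfl | ⟨l, rfl⟩ : k = 2 ∨ ∃ l, k = l + 3 := by
    obtain rfl | hk3 := hk.eq_or_lt'
    · exact .inl rfl
    · exact .inr ⟨k - 3, by lia⟩
  -- For `k = 2`, as for small groups below, a large constant `C` forces `t > |G|`.
  · refine ⟨2, two_pos, fun G _ _ r _ _ t ht => ?_⟩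
    have h_pos : 0 < Fintype.card G := Fintype.card_pos
    have ht_two : 2 * Fintype.card G ≤ t := by
      rify
      norm_num at ht
      exact ht
    have ht : Fintype.card G < t := by lia
    simp [filter_card_eq_of_card_lt ht]
  obtain ⟨c, n₁, hc, h_super⟩ := exists_le_card_edgesIn_powProdSolutions l
    (ε := (min β 1) ^ 2 / 64) (by positivity)
  obtain ⟨C, n₂, hC, h_count⟩ := card_isIndep_le_choose_of_coordDetermined l hc
    (β := min β 1) (by positivity) (min_le_right _ _)
  refine ⟨C + (n₁ + n₂ : ℕ), by positivity, fun G _ _ r hr hcop t ht => ?_⟩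
  rw [show ((l + 3 : ℕ) : ℝ) - 1 = l + 2 by push_cast; ring, add_mul] at ht
  set ρ : ℝ := (Fintype.card G : ℝ) ^ (1 / (l + 2) : ℝ)
  have hρ : 1 ≤ ρ := Real.one_le_rpow (by exact_mod_cast Fintype.card_pos) (by positivity)
  obtain h_small | h_large := lt_or_ge (Fintype.card G) (n₁ + n₂)
  · have ht : n₁ + n₂ ≤ t := by
      rify
      push_cast at ht
      nlinarith
    simp [filter_card_eq_of_card_lt (h_small.trans_le ht)]
  · have h_min := h_count G (powProdSolutions G r) (coordDetermined_powProdSolutions hcop)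
      (by lia) (h_super G r hr hcop (by lia)) t (by nlinarith)
    refine h_min.trans (Nat.choose_le_choose _ (Nat.floor_le_floor ?_))
    gcongr
    exact min_le_left _ _

/-- counting sets free of solutions (with pairwise distinct entries) of
`x_1^{r_1} ⋯ x_k^{r_k} = e` in finite (possibly non-abelian) groups. -/
theorem stmt14 (k : ℕ) (hk : 2 ≤ k) (r : Fin k → ℕ) (hr : ∀ j, 0 < r j)
    (G : ℕ → Type) [∀ i, Fintype (G i)] [∀ i, Group (G i)]
    (hG : Tendsto (fun i => (Fintype.card (G i) : ℝ)) atTop atTop)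
    (hexp : ∀ i, Monoid.exponent (G i) ∣ ∑ j, r j)
    (hcop : ∀ i j, Nat.Coprime (r j) (Fintype.card (G i)))
    (S : ∀ i, Finset (Fin k → G i))
    (hS : ∀ i (x : Fin k → G i), x ∈ S i ↔
      ((List.finRange k).map (fun j => x j ^ r j)).prod = 1)
    (β δ : ℝ) (hβ : 0 < β) (hδ0 : 0 < δ) (hδ : δ ≤ min (β/2) (1/40)) :
    ∃ (i₀ : ℕ) (C : ℝ), 0 < C ∧ ∀ i, i₀ ≤ i → ∀ t : ℕ,
      (C/δ) * (k:ℝ) ^ (-(1:ℝ)/((k:ℝ)-1)) *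
          (Fintype.card (G i) : ℝ) ^ ((1:ℝ)/((k:ℝ)-1)) ≤ (t:ℝ) →
      (t:ℝ) ≤ (δ/2) * (Fintype.card (G i) : ℝ) →
      ((Finset.univ.filter (fun X : Finset (G i) =>
          X.card = t ∧ ∀ x ∈ distinctPart (S i), ¬ (∀ j, x j ∈ X))).card : ℝ)
        ≤ (Nat.choose ⌊β * (Fintype.card (G i) : ℝ)⌋₊ t : ℝ) := by
  obtain ⟨C, hC, h_count⟩ := stmt14_general hk hβ
  have hSi (i : ℕ) : S i = powProdSolutions (G i) r := by
    ext x
    simp [powProdSolutions, hS]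
  refine ⟨0, C * δ / (k : ℝ) ^ (-(1 : ℝ) / ((k : ℝ) - 1)), by positivity, fun i _ t ht _ => ?_⟩
  have ht : C * (Fintype.card (G i) : ℝ) ^ (1 / (k - 1) : ℝ) ≤ t := by
    convert ht using 2
    field_simp
  rw [hSi]
  refine Nat.cast_le.2 (le_of_eq_of_le ?_ (h_count (G i) r (hexp i) (hcop i) t ht))
  congr!
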